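/- arXiv:1904.08578 — 2 statements merged into one kernel-verified Lean document; each statement's English description precedes it below -/
import Mathlib

section
/- Let V be a simple weight module with finite-dimensional weight spaces over the N=2 Ramond algebra 𝔤. Then V is a highest weight module, or a lowest weight module, or V is cuspidal with dim(V_λ ∩ V_τ) ≤ 2 for every λ ∈ ℂ and every parity τ ∈ {0,1}. -/
open Submodule

/-- A module over the `N = 2` Ramond algebra `𝔤`: a `ℤ/2`-graded complex vector
space `V = even ⊕ odd` with parity-preserving operators `L m`, `H m`,
parity-reversing operators `Gp m` (`G_m^+`), `Gm m` (`G_m^-`), and a scalar `c₀`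
(the action of the central element `C`), subject to the defining relations. -/
structure RamondRep (V : Type) [AddCommGroup V] [Module ℂ V] : Type where
  L : ℤ → V →ₗ[ℂ] V
  H : ℤ → V →ₗ[ℂ] V
  Gp : ℤ → V →ₗ[ℂ] V
  Gm : ℤ → V →ₗ[ℂ] V
  c₀ : ℂ
  even : Submodule ℂ V
  odd : Submodule ℂ V
  grading : IsCompl even odd
  L_even : ∀ (m : ℤ), ∀ v ∈ even, L m v ∈ even
  L_odd : ∀ (m : ℤ), ∀ v ∈ odd, L m v ∈ odd
  H_even : ∀ (m : ℤ), ∀ v ∈ even, H m v ∈ even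
  H_odd : ∀ (m : ℤ), ∀ v ∈ odd, H m v ∈ odd
  Gp_even : ∀ (m : ℤ), ∀ v ∈ even, Gp m v ∈ odd
  Gp_odd : ∀ (m : ℤ), ∀ v ∈ odd, Gp m v ∈ even
  Gm_even : ∀ (m : ℤ), ∀ v ∈ even, Gm m v ∈ odd
  Gm_odd : ∀ (m : ℤ), ∀ v ∈ odd, Gm m v ∈ even
  rel_LL : ∀ (m n : ℤ) (v : V),
    L m (L n v) - L n (L m v) =
      ((n : ℂ) - (m : ℂ)) • L (m + n) v +
        ((1 / 12 : ℂ) * ((n : ℂ) ^ 3 - (n : ℂ)) *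
          (if m + n = 0 then (1 : ℂ) else 0) * c₀) • v
  rel_HH : ∀ (m n : ℤ) (v : V),
    H m (H n v) - H n (H m v) =
      ((1 / 3 : ℂ) * (m : ℂ) * (if m + n = 0 then (1 : ℂ) else 0) * c₀) • v
  rel_LH : ∀ (m n : ℤ) (v : V),
    L m (H n v) - H n (L m v) = (n : ℂ) • H (m + n) v
  rel_LGp : ∀ (m p : ℤ) (v : V),
    L m (Gp p v) - Gp p (L m v) = ((p : ℂ) - (m : ℂ) / 2) • Gp (p + m) v
  rel_LGm : ∀ (m p : ℤ) (v : V),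
    L m (Gm p v) - Gm p (L m v) = ((p : ℂ) - (m : ℂ) / 2) • Gm (p + m) v
  rel_HGp : ∀ (m p : ℤ) (v : V),
    H m (Gp p v) - Gp p (H m v) = Gp (m + p) v
  rel_HGm : ∀ (m p : ℤ) (v : V),
    H m (Gm p v) - Gm p (H m v) = -(Gm (m + p) v)
  rel_GpGm : ∀ (p q : ℤ) (v : V),
    Gp p (Gm q v) + Gm q (Gp p v) =
      (-2 : ℂ) • L (p + q) v + ((p : ℂ) - (q : ℂ)) • H (p + q) v +
        ((1 / 3 : ℂ) * ((p : ℂ) ^ 2 - 1 / 4) *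
          (if p + q = 0 then (1 : ℂ) else 0) * c₀) • v
  rel_GpGp : ∀ (p q : ℤ) (v : V), Gp p (Gp q v) + Gp q (Gp p v) = 0
  rel_GmGm : ∀ (p q : ℤ) (v : V), Gm p (Gm q v) + Gm q (Gm p v) = 0

namespace RamondRep

variable {V : Type} [AddCommGroup V] [Module ℂ V]

/-- The weight space `V_μ = {v ∈ V : L₀ v = μ v}`. -/
def wt (ρ : RamondRep V) (μ : ℂ) : Submodule ℂ V :=
  Module.End.eigenspace (ρ.L 0) μ

/-- The parity components, indexed by `ZMod 2`. -/
def parity (ρ : RamondRep V) (τ : ZMod 2) : Submodule ℂ V :=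
  if τ = 0 then ρ.even else ρ.odd

/-- `V` is a weight module: it is the sum of its weight spaces. -/
def IsWeight (ρ : RamondRep V) : Prop := (⨆ μ : ℂ, ρ.wt μ) = ⊤

/-- `V` is cuspidal: a weight module with uniformly bounded weight multiplicities
in each parity. -/
def Cuspidal (ρ : RamondRep V) : Prop :=
  ρ.IsWeight ∧ ∃ p : ℕ, ∀ (μ : ℂ) (τ : ZMod 2),
    Module.rank ℂ ↥(ρ.wt μ ⊓ ρ.parity τ) ≤ (p : Cardinal)

/-- A subspace invariant under all the operators. -/
def IsSubmod (ρ : RamondRep V) (W : Submodule ℂ V) : Prop :=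
  (∀ (m : ℤ), ∀ v ∈ W, ρ.L m v ∈ W) ∧ (∀ (m : ℤ), ∀ v ∈ W, ρ.H m v ∈ W) ∧
    (∀ (m : ℤ), ∀ v ∈ W, ρ.Gp m v ∈ W) ∧ (∀ (m : ℤ), ∀ v ∈ W, ρ.Gm m v ∈ W)

/-- A graded subspace invariant under all the operators. -/
def IsGradedSubmod (ρ : RamondRep V) (W : Submodule ℂ V) : Prop :=
  ρ.IsSubmod W ∧ W = (W ⊓ ρ.even) ⊔ (W ⊓ ρ.odd)

/-- The trivial representation: all operators act by zero. -/
def IsTrivialRep (ρ : RamondRep V) : Prop :=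
  ∀ (m : ℤ) (v : V), ρ.L m v = 0 ∧ ρ.H m v = 0 ∧ ρ.Gp m v = 0 ∧ ρ.Gm m v = 0

/-- `V` is simple: nontrivial, and its only graded submodules are `⊥` and `⊤`. -/
def IsSimple (ρ : RamondRep V) : Prop :=
  ¬ ρ.IsTrivialRep ∧
    ∀ W : Submodule ℂ V, ρ.IsGradedSubmod W → W = ⊥ ∨ W = ⊤

/-- `V` is generated by `v` as a `𝔤`-module. -/
def GeneratedBy (ρ : RamondRep V) (v : V) : Prop :=
  ∀ W : Submodule ℂ V, ρ.IsSubmod W → v ∈ W → W = ⊤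

/-- `V` is a highest weight module. -/
def IsHighestWeight (ρ : RamondRep V) : Prop :=
  ∃ v : V, v ≠ 0 ∧ ρ.GeneratedBy v ∧
    (∃ h h' : ℂ, ρ.L 0 v = h • v ∧ ρ.H 0 v = h' • v) ∧
    (∀ m : ℤ, 0 < m → ρ.L m v = 0 ∧ ρ.H m v = 0 ∧ ρ.Gp m v = 0 ∧ ρ.Gm m v = 0) ∧
    ρ.Gp 0 v = 0

/-- `V` is a lowest weight module. -/
def IsLowestWeight (ρ : RamondRep V) : Prop :=
  ∃ v : V, v ≠ 0 ∧ ρ.GeneratedBy v ∧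
    (∃ h h' : ℂ, ρ.L 0 v = h • v ∧ ρ.H 0 v = h' • v) ∧
    (∀ m : ℤ, m < 0 → ρ.L m v = 0 ∧ ρ.H m v = 0 ∧ ρ.Gp m v = 0 ∧ ρ.Gm m v = 0) ∧
    ρ.Gm 0 v = 0

end RamondRep

/-!
The Jacobi identity forces `c₀ = 0`, and the centreless algebra is that of the vector fields on the
`(1|1)`-dimensional torus, with even fields `D n`, `I n` and odd fields `P n`, `Q n`.

If a nonzero weight vector is killed by all operators of two consecutive positive degrees,
simplicity spreads local nilpotency over the module, which produces a singular vector: the module is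
of highest weight (and of lowest weight in the case of negative degrees). Otherwise the operators of
degrees `j` and `j + 1` embed the weight space `μ - j` in copies of the weight spaces `μ` and
`μ + 1`, so the multiplicities are bounded along `μ + ℤ`. As `Q n` lowers the eigenvalue of `I 0` by
one, this bound yields a nonzero weight vector in the vacuum, the common kernel of all `Q n`.

The sequences `m ↦ Q (m - a) P n v`, with `v` in the vacuum, span a finite-dimensional space, since
`Q m P n v` depends on `m + n` and affinely on `m`. The vector fields on the circle vanishing at
`t = 1` act on this space together with the functions, and a common eigenvector is a sequence `x` of
vacuum vectors spanning a tensor density module. On it the operators `P n` are affine in `n`, so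
that the whole module is spanned by `x k`, `P 0 P 1 x (k - 1)` in one parity and `P 0 x k`,
`P 1 x (k - 1)` in the other.
-/

section LinearAlgebra

variable {K V : Type*} [Field K] [AddCommGroup V] [Module K V]

theorem span_inf_eigenspace_le (T : Module.End K V) {S : Set V}
    (hS : ∀ x ∈ S, ∃ c, x ∈ T.eigenspace c) (μ : K) :
    span K S ⊓ T.eigenspace μ ≤ span K (S ∩ T.eigenspace μ) := by
  rintro v ⟨hvS, hvμ⟩
  have hsplit : S ⊆ S ∩ T.eigenspace μ ∪ {x | ∃ c ≠ μ, x ∈ T.eigenspace c} := fun x hx ↦ by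
    obtain ⟨c, hc⟩ := hS x hx
    rcases eq_or_ne c μ with rfl | hne
    exacts [.inl ⟨hx, hc⟩, .inr ⟨c, hne, hc⟩]
  have hv := span_mono hsplit hvS
  rw [span_union, mem_sup] at hv
  obtain ⟨a, ha, b, hb, rfl⟩ := hv
  have haμ : a ∈ T.eigenspace μ := span_le.2 Set.inter_subset_right ha
  have hbμ : b ∈ T.eigenspace μ := (Submodule.add_mem_iff_right _ haμ).1 hvμ
  have hb' : b ∈ ⨆ c, ⨆ (_ : c ≠ μ), T.eigenspace c := by
    refine span_le.2 ?_ hb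
    rintro x ⟨c, hc, hx⟩
    exact mem_iSup_of_mem c (mem_iSup_of_mem hc hx)
  have hb0 : b = 0 := disjoint_def.1 (T.eigenspaces_iSupIndep μ) b hbμ hb'
  rwa [hb0, add_zero]

theorem eq_of_mem_eigenspace {T : Module.End K V} {x : V} {a b : K} (hx : x ≠ 0)
    (ha : x ∈ T.eigenspace a) (hb : x ∈ T.eigenspace b) : a = b :=
  smul_left_injective K hx <|
    (Module.End.mem_eigenspace_iff.1 ha).symm.trans (Module.End.mem_eigenspace_iff.1 hb)

section JointEigenspace

variable {ι : Type*} {T S : Module.End K V} {X : ι → Submodule K V} {f g : ι → K}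

theorem eigenspace_inf_eigenspace_le_span
    (hX : ∀ i, X i ≤ T.eigenspace (f i) ⊓ S.eigenspace (g i)) (htop : ⨆ i, X i = ⊤) (μ δ : K) :
    T.eigenspace μ ⊓ S.eigenspace δ ≤
      span K ((⋃ i, (X i : Set V)) ∩ T.eigenspace μ ∩ S.eigenspace δ) := fun v hv ↦ by
  have hvX : v ∈ span K (⋃ i, (X i : Set V)) := iSup_eq_span X ▸ htop ▸ mem_top
  refine span_inf_eigenspace_le S (fun x hx ↦ ?_) δ
    ⟨span_inf_eigenspace_le T (fun x hx ↦ ?_) μ ⟨hvX, hv.1⟩, hv.2⟩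
  · obtain ⟨i, hi⟩ := Set.mem_iUnion.1 hx.1
    exact ⟨g i, (hX i hi).2⟩
  · obtain ⟨i, hi⟩ := Set.mem_iUnion.1 hx
    exact ⟨f i, (hX i hi).1⟩

theorem rank_eigenspace_inf_eigenspace_le (hfg : Function.Injective fun i ↦ (f i, g i))
    (hX : ∀ i, X i ≤ T.eigenspace (f i) ⊓ S.eigenspace (g i)) (htop : ⨆ i, X i = ⊤)
    {r : Cardinal} (hr : ∀ i, Module.rank K (X i) ≤ r) (μ δ : K) :
    Module.rank K ↥(T.eigenspace μ ⊓ S.eigenspace δ) ≤ r := by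
  have hspan := eigenspace_inf_eigenspace_le_span hX htop μ δ
  have hindex {i : ι} {x : V} (hx0 : x ≠ 0) (hi : x ∈ X i) (hxμ : x ∈ T.eigenspace μ)
      (hxδ : x ∈ S.eigenspace δ) : f i = μ ∧ g i = δ :=
    ⟨eq_of_mem_eigenspace hx0 (hX i hi).1 hxμ, eq_of_mem_eigenspace hx0 (hX i hi).2 hxδ⟩
  by_cases hex : ∃ i, f i = μ ∧ g i = δ
  · obtain ⟨i, rfl, rfl⟩ := hex
    refine (Submodule.rank_mono (hspan.trans (span_le.2 ?_))).trans (hr i)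
    rintro x ⟨⟨hx, hxμ⟩, hxδ⟩
    obtain ⟨j, hj⟩ := Set.mem_iUnion.1 hx
    rcases eq_or_ne x 0 with rfl | hx0
    · exact zero_mem _
    · obtain rfl := hfg (Prod.ext_iff.2 (hindex hx0 hj hxμ hxδ))
      exact hj
  · have hbot : T.eigenspace μ ⊓ S.eigenspace δ = ⊥ := by
      refine le_bot_iff.1 (hspan.trans (span_le.2 ?_))
      rintro x ⟨⟨hx, hxμ⟩, hxδ⟩
      obtain ⟨j, hj⟩ := Set.mem_iUnion.1 hx
      by_contra hx0
      exact hex ⟨j, hindex hx0 hj hxμ hxδ⟩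
    rw [hbot, rank_bot]
    exact zero_le

end JointEigenspace

theorem exists_inf_eigenspace_ne_bot [IsAlgClosed K] (T : Module.End K V) {X : Submodule K V}
    [FiniteDimensional K X] (hX : X ≠ ⊥) (hT : ∀ x ∈ X, T x ∈ X) :
    ∃ a, X ⊓ T.eigenspace a ≠ ⊥ := by
  have : Nontrivial X := Submodule.nontrivial_iff_ne_bot.2 hX
  obtain ⟨a, ha⟩ := Module.End.exists_eigenvalue (T.restrict hT)
  obtain ⟨x, hx⟩ := ha.exists_hasEigenvector
  refine ⟨a, (Submodule.ne_bot_iff _).2 ⟨x, ⟨x.2, ?_⟩, by simpa using hx.2⟩⟩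
  exact Module.End.mem_eigenspace_iff.2 (congrArg Subtype.val hx.apply_eq_smul)

theorem inf_ker_ne_bot {F : Module.End K V} {X : Submodule K V} (hX : X ≠ ⊥)
    (hFX : ∀ x ∈ X, F x ∈ X) (hFF : ∀ x, F (F x) = 0) : X ⊓ LinearMap.ker F ≠ ⊥ := by
  obtain ⟨x, hx, hx0⟩ := (Submodule.ne_bot_iff _).1 hX
  by_cases hFx : F x = 0
  · exact (Submodule.ne_bot_iff _).2 ⟨x, ⟨hx, hFx⟩, hx0⟩
  · exact (Submodule.ne_bot_iff _).2 ⟨F x, ⟨hFX x hx, hFF x⟩, hFx⟩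

theorem card_le_finrank_of_inf_eigenspace_ne_bot {ι : Type*} (T : Module.End K V)
    (X : Submodule K V) [FiniteDimensional K X] (s : Finset ι) {f : ι → K}
    (hf : Function.Injective f) (hs : ∀ i ∈ s, X ⊓ T.eigenspace (f i) ≠ ⊥) :
    s.card ≤ Module.finrank K X := by
  choose x hx hx0 using fun i : s ↦ (Submodule.ne_bot_iff _).1 (hs i i.2)
  have hli : LinearIndependent K x :=
    T.eigenvectors_linearIndependent' (fun i : s ↦ f i) (hf.comp Subtype.val_injective) x
      fun i ↦ Module.End.hasEigenvector_iff.2 ⟨(hx i).2, hx0 i⟩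
  have hliX : LinearIndependent K (fun i ↦ (⟨x i, (hx i).1⟩ : X)) :=
    LinearIndependent.of_comp X.subtype hli
  simpa using hliX.fintype_card_le_finrank

/-- An eigenvalue `e` of `T` such that no other element of `e + ℕ` is an eigenvalue. -/
def IsTopEigenvalue (T : Module.End K V) (e : K) : Prop :=
  T.HasEigenvalue e ∧ ∀ k : ℕ, T.HasEigenvalue (e + k) → k = 0

theorem exists_isTopEigenvalue_add_natCast [CharZero K] [FiniteDimensional K V]
    {T : Module.End K V} {c : K} (hc : T.HasEigenvalue c) :
    ∃ k : ℕ, IsTopEigenvalue T (c + k) := by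
  have hfin : {k : ℕ | T.HasEigenvalue (c + k)}.Finite :=
    T.finite_hasEigenvalue.preimage fun a _ b _ hab ↦ by simpa using hab
  obtain ⟨k, hk, hmax⟩ := hfin.exists_maximalFor id _ ⟨0, by simpa using hc⟩
  refine ⟨k, hk, fun j hj ↦ ?_⟩
  have := hmax (j := k + j) (by simpa [add_assoc] using hj) (by simp)
  simpa using this

end LinearAlgebra

section TwistedPair

variable {K U : Type*} [Field K] [AddCommGroup U] [Module K U]

/-- An action of the Lie algebra of the vector fields `E a = (t ^ a - 1) t d/dt` vanishing at
`t = 1`, together with the functions `J b = t ^ b`, with constants acting by `h`. -/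
structure TwistedPair (E J : ℤ → Module.End K U) (h : K) : Prop where
  E_zero (u : U) : E 0 u = 0
  J_zero (u : U) : J 0 u = h • u
  E_E (a b : ℤ) (u : U) : E a (E b u) =
    E b (E a u) + (a : K) • E a u - (b : K) • E b u + ((b : K) - a) • E (a + b) u
  E_J (a b : ℤ) (u : U) : E a (J b u) = J b (E a u) + (b : K) • (J (a + b) u - J b u)

namespace TwistedPair

variable {E J : ℤ → Module.End K U} {h e : K}

theorem neg (hE : TwistedPair E J h) :
    TwistedPair (fun a ↦ -E (-a)) (fun a ↦ J (-a)) h where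
  E_zero u := by simp [hE.E_zero]
  J_zero u := by simp [hE.J_zero]
  E_E a b u := by
    have := hE.E_E (-a) (-b) u
    simp only [LinearMap.neg_apply, map_neg, neg_neg, this, neg_add]
    push_cast
    module
  E_J a b u := by
    have := hE.E_J (-a) (-b) u
    simp only [LinearMap.neg_apply, map_neg, this, neg_add]
    push_cast
    module

theorem apply_neg_natCast (hE : TwistedPair E J h) (he : IsTopEigenvalue (E 1) e) {v : U}
    (hv : E 1 v = e • v) (n : ℕ) :
    E (-n) v = (-n * e) • v ∧ J (-n) v = h • v := by
  have eq_zero {k : ℕ} {w : U} (hw : E 1 w = (e + (k + 1 : ℕ)) • w) : w = 0 := by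
    by_contra hw0
    exact absurd (he.2 (k + 1) (Module.End.hasEigenvalue_of_hasEigenvector
      (Module.End.hasEigenvector_iff.2 ⟨Module.End.mem_eigenspace_iff.2 hw, hw0⟩))) (by simp)
  induction n with
  | zero => simp [hE.E_zero, hE.J_zero]
  | succ n ih =>
    have hidx : (1 : ℤ) + -((n + 1 : ℕ) : ℤ) = -(n : ℤ) := by push_cast; ring
    constructor
    · have hcomm := hE.E_E 1 (-((n + 1 : ℕ) : ℤ)) v
      rw [hidx, hv, ih.1, map_smul] at hcomm
      refine sub_eq_zero.1 (eq_zero (k := n) ?_)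
      rw [map_sub, map_smul, hv, hcomm]
      push_cast
      module
    · have hcomm := hE.E_J 1 (-((n + 1 : ℕ) : ℤ)) v
      rw [hidx, hv, ih.2, map_smul] at hcomm
      refine sub_eq_zero.1 (eq_zero (k := n) ?_)
      rw [map_sub, map_smul, hv, hcomm]
      push_cast
      module

theorem neg_apply_neg_one (hE : TwistedPair E J h) (he : IsTopEigenvalue (E 1) e) {v : U}
    (hv : E 1 v = e • v) : (-E (-1)) v = e • v := by
  have := (hE.apply_neg_natCast he hv 1).1
  rw [LinearMap.neg_apply, neg_eq_iff_eq_neg, ← neg_smul]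
  simpa using this

/- `E 1 + E (-1)` raises the eigenvalues of `-E (-1)` by one, so it kills the eigenvectors for a
top eigenvalue of `-E (-1)`, which are therefore eigenvectors of `E 1`. -/
theorem isTopEigenvalue_neg [CharZero K] [FiniteDimensional K U] (hE : TwistedPair E J h)
    (he : IsTopEigenvalue (E 1) e) : IsTopEigenvalue (-E (-1)) e := by
  obtain ⟨v, hv⟩ := he.1.exists_hasEigenvector
  have hv' := hE.neg_apply_neg_one he hv.apply_eq_smul
  refine ⟨Module.End.hasEigenvalue_of_hasEigenvector
    (Module.End.hasEigenvector_iff.2 ⟨Module.End.mem_eigenspace_iff.2 hv', hv.2⟩), fun k hk ↦ ?_⟩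
  obtain ⟨j, hj, hmax⟩ := exists_isTopEigenvalue_add_natCast hk
  obtain ⟨w, hw⟩ := hj.exists_hasEigenvector
  have hw' : E (-1) w = -((e + k + j) • w) := by
    rw [← hw.apply_eq_smul, LinearMap.neg_apply, neg_neg]
  have hraise : (-E (-1)) (E 1 w + E (-1) w) = (e + k + j + (1 : ℕ)) • (E 1 w + E (-1) w) := by
    have := hE.E_E (-1) 1 w
    rw [neg_add_cancel, hE.E_zero] at this
    simp only [LinearMap.neg_apply, map_add, this, hw', map_neg, map_smul]
    push_cast
    module
  have hkill : E 1 w + E (-1) w = 0 := by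
    by_contra hne
    exact absurd (hmax 1 (Module.End.hasEigenvalue_of_hasEigenvector
      (Module.End.hasEigenvector_iff.2 ⟨Module.End.mem_eigenspace_iff.2 hraise, hne⟩))) (by simp)
  have hw1 : E 1 w = (e + (k + j : ℕ)) • w := by
    rw [eq_neg_of_add_eq_zero_left hkill, hw']
    push_cast
    module
  have := he.2 (k + j) (Module.End.hasEigenvalue_of_hasEigenvector
    (Module.End.hasEigenvector_iff.2 ⟨Module.End.mem_eigenspace_iff.2 hw1, hw.2⟩))
  omega

theorem exists_common_eigenvector [CharZero K] [IsAlgClosed K] [FiniteDimensional K U]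
    [Nontrivial U] (hE : TwistedPair E J h) :
    ∃ (e : K) (u : U), u ≠ 0 ∧ ∀ a : ℤ, E a u = (a * e) • u ∧ J a u = h • u := by
  obtain ⟨c, hc⟩ := Module.End.exists_eigenvalue (E 1)
  obtain ⟨k, he⟩ := exists_isTopEigenvalue_add_natCast hc
  obtain ⟨u, hu⟩ := he.1.exists_hasEigenvector
  have hneg := hE.apply_neg_natCast he hu.apply_eq_smul
  have hpos := hE.neg.apply_neg_natCast (hE.isTopEigenvalue_neg he)
    (hE.neg_apply_neg_one he hu.apply_eq_smul)
  refine ⟨c + k, u, hu.2, fun a ↦ ?_⟩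
  obtain ⟨n, rfl | rfl⟩ := a.eq_nat_or_neg
  · simpa [neg_eq_iff_eq_neg, ← neg_smul] using hpos n
  · simpa using hneg n

end TwistedPair

end TwistedPair

section Counting

/- Double counting: on a window of radius `N` around the chosen positions each row has at least `N`
positions, and each of the about `2 * N` columns meets at most `p` rows. -/
theorem card_le_two_mul_of_symmetric_rows {ι : Type*} (R : Finset ι) (S : ι → ℤ → Prop)
    (p : ℕ) (hcol : ∀ k, ∀ F : Finset ι, (∀ j ∈ F, S j k) → F.card ≤ p)
    (hrow : ∀ j ∈ R, ∃ k : ℤ, ∀ n : ℤ, 0 < n → S j (k + n) ∨ S j (k - n)) :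
    R.card ≤ 2 * p := by
  classical
  choose! c hc using hrow
  set C : ℕ := R.sup fun j ↦ (c j).natAbs
  have hC : ∀ j ∈ R, (c j).natAbs ≤ C := fun j hj ↦ Finset.le_sup (f := fun j ↦ (c j).natAbs) hj
  set N : ℕ := p * (2 * C + 1) + 1 with hN
  set window : Finset ℤ := Finset.Icc (-(C + N : ℕ)) (C + N : ℕ)
  have habove : ∀ j ∈ R, N ≤ (window.bipartiteAbove S j).card := fun j hj ↦ by
    have hb := hC j hj
    have hcard : (Finset.Icc (1 : ℤ) N).card = N := by simp
    refine hcard.symm.trans_le <| Finset.card_le_card_of_injOn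
      (fun n ↦ if S j (c j + n) then c j + n else c j - n) (fun n hn ↦ ?_) fun n hn m hm hnm ↦ ?_
    · rw [Finset.mem_coe, Finset.mem_Icc] at hn
      rw [Finset.mem_coe, Finset.mem_bipartiteAbove, Finset.mem_Icc]
      dsimp only
      split_ifs with h
      · exact ⟨by omega, h⟩
      · exact ⟨by omega, (hc j hj n (by omega)).resolve_left h⟩
    · rw [Finset.mem_coe, Finset.mem_Icc] at hn hm
      dsimp only at hnm
      split_ifs at hnm <;> omega
  have hbelow : ∀ k ∈ window, (R.bipartiteBelow S k).card ≤ p := fun k _ ↦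
    hcol k _ fun j hj ↦ ((Finset.mem_bipartiteBelow S).1 hj).2
  have hwindow : window.card = 2 * (C + N) + 1 := by simp only [window, Int.card_Icc]; omega
  have hcount : R.card * N ≤ (2 * (C + N) + 1) * p :=
    hwindow ▸ Finset.card_mul_le_card_mul S habove hbelow
  by_contra! hlt
  have := Nat.mul_le_mul_right N (show 2 * p + 1 ≤ R.card from hlt)
  nlinarith

end Counting

/-- A module over the Lie superalgebra of vector fields on the `(1|1)`-dimensional torus with even
coordinate `t` and odd coordinate `ξ`, with the basis `D n = t ^ (n + 1) ∂_t`, `I n = t ^ n ξ ∂_ξ`,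
`P n = t ^ (n + 1) ξ ∂_t`, `Q n = t ^ n ∂_ξ`. The grading is recorded by the parity operator `σ`,
which is `1` on even and `-1` on odd vectors. -/
structure SuperWittRep (K V : Type*) [Field K] [AddCommGroup V] [Module K V] where
  D : ℤ → Module.End K V
  I : ℤ → Module.End K V
  P : ℤ → Module.End K V
  Q : ℤ → Module.End K V
  σ : Module.End K V
  D_D (m n : ℤ) (v : V) : D m (D n v) = D n (D m v) + ((n : K) - m) • D (m + n) v
  D_I (m n : ℤ) (v : V) : D m (I n v) = I n (D m v) + (n : K) • I (m + n) v
  I_I (m n : ℤ) (v : V) : I m (I n v) = I n (I m v)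
  D_Q (m n : ℤ) (v : V) : D m (Q n v) = Q n (D m v) + (n : K) • Q (m + n) v
  D_P (m n : ℤ) (v : V) : D m (P n v) = P n (D m v) + ((n : K) - m) • P (m + n) v
  I_Q (m n : ℤ) (v : V) : I m (Q n v) = Q n (I m v) - Q (m + n) v
  I_P (m n : ℤ) (v : V) : I m (P n v) = P n (I m v) + P (m + n) v
  Q_P (m n : ℤ) (v : V) : Q m (P n v) = -P n (Q m v) + D (m + n) v + (m : K) • I (m + n) v
  Q_Q (m n : ℤ) (v : V) : Q m (Q n v) = -Q n (Q m v)
  P_P (m n : ℤ) (v : V) : P m (P n v) = -P n (P m v)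
  σ_σ (v : V) : σ (σ v) = v
  σ_D (m : ℤ) (v : V) : σ (D m v) = D m (σ v)
  σ_I (m : ℤ) (v : V) : σ (I m v) = I m (σ v)
  σ_P (m : ℤ) (v : V) : σ (P m v) = -P m (σ v)
  σ_Q (m : ℤ) (v : V) : σ (Q m v) = -Q m (σ v)

namespace SuperWittRep

variable {K V : Type*} [Field K] [AddCommGroup V] [Module K V] (ρ : SuperWittRep K V)

/-- The four families `D`, `I`, `P`, `Q` of operators, indexed together so that they can be treated
uniformly. -/
def op : Fin 4 → ℤ → Module.End K V := ![ρ.D, ρ.I, ρ.P, ρ.Q]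

/-- The common kernel of the operators of degree `n`. -/
def killed (n : ℤ) : Submodule K V := ⨅ i, LinearMap.ker (ρ.op i n)

/-- The weight space of weight `μ`, for the grading element `D 0 = t ∂_t`. -/
def wt (μ : K) : Submodule K V := (ρ.D 0).eigenspace μ

/-- The vectors of weight `μ` killed by all operators whose degree lies in `A`. The singular vectors
of highest and lowest weight modules are obtained for `A = Set.Ioi 0` and `A = Set.Iio 0`. -/
def extremal (A : Set ℤ) (μ : K) : Submodule K V := ρ.wt μ ⊓ ⨅ n ∈ A, ρ.killed n

/-- A graded submodule: gradedness of a subspace is its stability under `σ`. -/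
structure IsInvariant (W : Submodule K V) : Prop where
  op_mem (i : Fin 4) (n : ℤ) {v : V} (hv : v ∈ W) : ρ.op i n v ∈ W
  σ_mem {v : V} (hv : v ∈ W) : ρ.σ v ∈ W

/-- A simple module: nontrivial, without proper nonzero graded submodules. -/
structure IsSimple : Prop where
  nontrivial : ∃ i n v, ρ.op i n v ≠ 0
  eq_bot_or_eq_top {W : Submodule K V} (hW : ρ.IsInvariant W) : W = ⊥ ∨ W = ⊤

/-- The module obtained by pulling back along the automorphism induced by `t ↦ t⁻¹`. -/
def reverse : SuperWittRep K V where
  D n := -ρ.D (-n)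
  I n := ρ.I (-n)
  P n := -ρ.P (-n)
  Q n := ρ.Q (-n)
  σ := ρ.σ
  D_D m n v := by
    simp only [LinearMap.neg_apply, map_neg, ρ.D_D (-m) (-n), neg_add m n]
    push_cast; module
  D_I m n v := by
    simp only [LinearMap.neg_apply, map_neg, ρ.D_I (-m) (-n), neg_add m n]
    push_cast; module
  I_I m n v := ρ.I_I _ _ _
  D_Q m n v := by
    simp only [LinearMap.neg_apply, map_neg, ρ.D_Q (-m) (-n), neg_add m n]
    push_cast; module
  D_P m n v := by
    simp only [LinearMap.neg_apply, map_neg, ρ.D_P (-m) (-n), neg_add m n]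
    push_cast; module
  I_Q m n v := by rw [ρ.I_Q (-m) (-n), neg_add m n]
  I_P m n v := by
    simp only [LinearMap.neg_apply, map_neg, ρ.I_P (-m) (-n), neg_add m n]
    module
  Q_P m n v := by
    simp only [LinearMap.neg_apply, map_neg, ρ.Q_P (-m) (-n), neg_add m n]
    push_cast; module
  Q_Q m n v := ρ.Q_Q _ _ _
  P_P m n v := by simp only [LinearMap.neg_apply, map_neg, ρ.P_P (-m) (-n)]
  σ_σ := ρ.σ_σ
  σ_D m v := by simp only [LinearMap.neg_apply, map_neg, ρ.σ_D]
  σ_I m v := ρ.σ_I _ _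
  σ_P m v := by simp only [LinearMap.neg_apply, map_neg, ρ.σ_P]
  σ_Q m v := ρ.σ_Q _ _

variable {ρ} {A : Set ℤ} {a n : ℤ} {μ ν : K} {v : V}

theorem mem_killed : v ∈ ρ.killed n ↔ ∀ i, ρ.op i n v = 0 := by simp [killed]

theorem mem_killed_iff :
    v ∈ ρ.killed n ↔ ρ.D n v = 0 ∧ ρ.I n v = 0 ∧ ρ.P n v = 0 ∧ ρ.Q n v = 0 := by
  simp [mem_killed, op, Fin.forall_fin_succ]

theorem mem_wt : v ∈ ρ.wt μ ↔ ρ.D 0 v = μ • v := Module.End.mem_eigenspace_iff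

theorem mem_extremal : v ∈ ρ.extremal A μ ↔ v ∈ ρ.wt μ ∧ ∀ n ∈ A, v ∈ ρ.killed n := by
  simp [extremal]

theorem op_mem_wt (i : Fin 4) (hv : v ∈ ρ.wt μ) (hν : μ + n = ν) : ρ.op i n v ∈ ρ.wt ν := by
  have hcomm : ρ.D 0 (ρ.op i n v) = ρ.op i n (ρ.D 0 v) + (n : K) • ρ.op i n v := by
    match i with
    | 0 => simpa [op] using ρ.D_D 0 n v
    | 1 => simpa [op] using ρ.D_I 0 n v
    | 2 => simpa [op] using ρ.D_P 0 n v
    | 3 => simpa [op] using ρ.D_Q 0 n v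
  rw [mem_wt] at *
  rw [hcomm, hv, map_smul, ← hν, add_smul]

theorem D_mem_wt (hv : v ∈ ρ.wt μ) (hν : μ + n = ν) : ρ.D n v ∈ ρ.wt ν := op_mem_wt 0 hv hν

theorem I_mem_wt (hv : v ∈ ρ.wt μ) (hν : μ + n = ν) : ρ.I n v ∈ ρ.wt ν := op_mem_wt 1 hv hν

theorem P_mem_wt (hv : v ∈ ρ.wt μ) (hν : μ + n = ν) : ρ.P n v ∈ ρ.wt ν := op_mem_wt 2 hv hν

theorem Q_mem_wt (hv : v ∈ ρ.wt μ) (hν : μ + n = ν) : ρ.Q n v ∈ ρ.wt ν := op_mem_wt 3 hv hν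

theorem σ_mem_wt (hv : v ∈ ρ.wt μ) : ρ.σ v ∈ ρ.wt μ := by
  rw [mem_wt] at *
  rw [← ρ.σ_D, hv, map_smul]

theorem σ_mem_killed (hv : v ∈ ρ.killed n) : ρ.σ v ∈ ρ.killed n := by
  rw [mem_killed_iff] at *
  obtain ⟨hD, hI, hP, hQ⟩ := hv
  refine ⟨?_, ?_, ?_, ?_⟩
  · rw [← ρ.σ_D, hD, map_zero]
  · rw [← ρ.σ_I, hI, map_zero]
  · rw [← neg_eq_zero, ← ρ.σ_P, hP, map_zero]
  · rw [← neg_eq_zero, ← ρ.σ_Q, hQ, map_zero]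

theorem op_mem_killed (i : Fin 4) (hn : v ∈ ρ.killed n) (han : v ∈ ρ.killed (a + n)) :
    ρ.op i a v ∈ ρ.killed n := by
  have hna : v ∈ ρ.killed (n + a) := by rwa [add_comm]
  rw [mem_killed_iff] at hn han hna
  obtain ⟨hD, hI, hP, hQ⟩ := hn
  rw [mem_killed_iff]
  match i with
  | 0 =>
    refine ⟨by simp [op, ρ.D_D n, hD, hna], ?_, ?_, ?_⟩
    · simpa [op, hI, han] using (ρ.D_I a n v).symm
    · simpa [op, hP, han] using (ρ.D_P a n v).symm
    · simpa [op, hQ, han] using (ρ.D_Q a n v).symm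
  | 1 =>
    refine ⟨by simp [op, ρ.D_I n, hD, hna], by simp [op, ρ.I_I n, hI], ?_, ?_⟩
    · simpa [op, hP, han] using (ρ.I_P a n v).symm
    · simpa [op, hQ, han] using (ρ.I_Q a n v).symm
  | 2 =>
    exact ⟨by simp [op, ρ.D_P n, hD, hna], by simp [op, ρ.I_P n, hI, hna],
      by simp [op, ρ.P_P n, hP], by simp [op, ρ.Q_P n, hQ, hna]⟩
  | 3 =>
    refine ⟨by simp [op, ρ.D_Q n, hD, hna], by simp [op, ρ.I_Q n, hI, hna], ?_,
      by simp [op, ρ.Q_Q n, hQ]⟩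
    simpa [op, hP, han] using (ρ.Q_P a n v).symm

theorem op_zero_mem_extremal (i : Fin 4) (hv : v ∈ ρ.extremal A μ) :
    ρ.op i 0 v ∈ ρ.extremal A μ := by
  rw [mem_extremal] at *
  exact ⟨op_mem_wt i hv.1 (by simp), fun n hn ↦
    op_mem_killed i (hv.2 n hn) (by simpa using hv.2 n hn)⟩

theorem σ_mem_extremal (hv : v ∈ ρ.extremal A μ) : ρ.σ v ∈ ρ.extremal A μ := by
  rw [mem_extremal] at *
  exact ⟨σ_mem_wt hv.1, fun n hn ↦ σ_mem_killed (hv.2 n hn)⟩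

section Reverse

variable (ρ)

theorem killed_reverse (n : ℤ) : ρ.reverse.killed n = ρ.killed (-n) := by
  ext v
  simp [mem_killed_iff, reverse]

theorem wt_reverse (μ : K) : ρ.reverse.wt μ = ρ.wt (-μ) := by
  ext v
  simp [mem_wt, reverse, neg_eq_iff_eq_neg]

theorem extremal_reverse_Ioi (μ : K) :
    ρ.reverse.extremal (Set.Ioi 0) μ = ρ.extremal (Set.Iio 0) (-μ) := by
  ext v
  rw [mem_extremal, mem_extremal, wt_reverse]
  refine and_congr_right fun _ ↦ ⟨fun h n hn ↦ ?_, fun h n hn ↦ ?_⟩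
  · simpa [killed_reverse] using h (-n) (by simpa using hn)
  · simpa [killed_reverse] using h (-n) (by simpa using hn)

end Reverse

section Simple

theorem IsInvariant.of_reverse {W : Submodule K V} (hW : ρ.reverse.IsInvariant W) :
    ρ.IsInvariant W where
  op_mem i n v hv := by
    have := hW.op_mem i (-n) hv
    match i with
    | 0 | 1 | 2 | 3 => simpa [op, reverse] using this
  σ_mem := hW.σ_mem

theorem IsSimple.eq_top (hρ : ρ.IsSimple) {W : Submodule K V} (hW : ρ.IsInvariant W) (hv : v ∈ W)
    (hv0 : v ≠ 0) : W = ⊤ :=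
  (hρ.eq_bot_or_eq_top hW).resolve_left fun h ↦ hv0 (by simpa [h] using hv)

theorem IsSimple.eq_top_of_op_mem (hρ : ρ.IsSimple) {W : Submodule K V}
    (hW : ∀ i n, ∀ v ∈ W, ρ.op i n v ∈ W) (hv : v ∈ W) (hv0 : v ≠ 0) {ε : K}
    (hσ : ρ.σ v = ε • v) : W = ⊤ := by
  have hinv : ρ.IsInvariant (W ⊓ W.comap ρ.σ) := by
    refine ⟨fun i n w hw ↦ ⟨hW i n w hw.1, mem_comap.2 ?_⟩,
      fun {w} hw ↦ ⟨hw.2, mem_comap.2 ((ρ.σ_σ w).symm ▸ hw.1)⟩⟩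
    have hop := hW i n _ hw.2
    match i with
    | 0 => exact ρ.σ_D n w ▸ hop
    | 1 => exact ρ.σ_I n w ▸ hop
    | 2 => exact ρ.σ_P n w ▸ neg_mem hop
    | 3 => exact ρ.σ_Q n w ▸ neg_mem hop
  exact top_le_iff.1 (hρ.eq_top hinv ⟨hv, mem_comap.2 (hσ ▸ smul_mem _ _ hv)⟩ hv0 ▸ inf_le_left)

theorem IsSimple.reverse (hρ : ρ.IsSimple) : ρ.reverse.IsSimple where
  nontrivial := by
    by_contra! h
    obtain ⟨i, n, v, hv⟩ := hρ.nontrivial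
    have hkilled : v ∈ ρ.reverse.killed (-n) := mem_killed.2 fun i ↦ h i (-n) v
    rw [killed_reverse, neg_neg] at hkilled
    exact hv (mem_killed.1 hkilled i)
  eq_bot_or_eq_top hW := hρ.eq_bot_or_eq_top hW.of_reverse

theorem IsSimple.eq_zero_of_forall_mem_killed (hρ : ρ.IsSimple) (hv : ∀ n, v ∈ ρ.killed n) :
    v = 0 := by
  have hinv : ρ.IsInvariant (⨅ n, ρ.killed n) :=
    ⟨fun i a w hw ↦ mem_iInf _ |>.2 fun n ↦
      op_mem_killed i (mem_iInf _ |>.1 hw n) (mem_iInf _ |>.1 hw _),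
      fun hw ↦ mem_iInf _ |>.2 fun n ↦ σ_mem_killed (mem_iInf _ |>.1 hw n)⟩
  by_contra hv0
  obtain ⟨i, n, w, hw⟩ := hρ.nontrivial
  have hmem : w ∈ ⨅ n, ρ.killed n := hρ.eq_top hinv (mem_iInf _ |>.2 hv) hv0 ▸ mem_top
  exact hw (mem_killed.1 (mem_iInf _ |>.1 hmem n) i)

end Simple

section Extremal

open Filter

variable {m : ℤ}

variable (ρ) in
/-- The vectors killed by all operators of sufficiently large degree. -/
def locallyKilled : Submodule K V where
  carrier := {v | ∀ᶠ n in atTop, v ∈ ρ.killed n}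
  zero_mem' := .of_forall fun _ ↦ zero_mem _
  add_mem' hv hw := (hv.and hw).mono fun _ h ↦ add_mem h.1 h.2
  smul_mem' c _ hv := hv.mono fun _ h ↦ smul_mem _ c h

theorem mem_locallyKilled : v ∈ ρ.locallyKilled ↔ ∀ᶠ n in atTop, v ∈ ρ.killed n := Iff.rfl

theorem isInvariant_locallyKilled : ρ.IsInvariant ρ.locallyKilled where
  op_mem i a _ hv := (hv.and ((tendsto_atTop_add_const_left _ a tendsto_id).eventually hv)).mono
    fun _ h ↦ op_mem_killed i h.1 h.2
  σ_mem hv := hv.mono fun _ ↦ σ_mem_killed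

theorem IsSimple.eventually_wt_le_killed (hρ : ρ.IsSimple) (hv : v ∈ ρ.locallyKilled) (hv0 : v ≠ 0)
    (μ : K) [FiniteDimensional K (ρ.wt μ)] : ∀ᶠ n in atTop, ρ.wt μ ≤ ρ.killed n := by
  obtain ⟨S, hS⟩ : (ρ.wt μ).FG := Module.Finite.iff_fg.1 inferInstance
  have hall : ∀ᶠ n in atTop, ∀ w ∈ S, w ∈ ρ.killed n :=
    (eventually_all_finset S).2 fun w _ ↦ mem_locallyKilled.1 <|
      hρ.eq_top isInvariant_locallyKilled hv hv0 ▸ mem_top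
  filter_upwards [hall] with n hn
  rw [← hS]
  exact span_le.2 hn

section CharZero

variable [CharZero K]

variable (ρ) in
theorem P_P_self (n : ℤ) (v : V) : ρ.P n (ρ.P n v) = 0 :=
  have := IsAddTorsionFree.of_isTorsionFree K V
  self_eq_neg.1 (ρ.P_P n n v)

variable (ρ) in
theorem Q_Q_self (n : ℤ) (v : V) : ρ.Q n (ρ.Q n v) = 0 :=
  have := IsAddTorsionFree.of_isTorsionFree K V
  self_eq_neg.1 (ρ.Q_Q n n v)

theorem mem_killed_add (hm : m ≠ 0) (hv : v ∈ ρ.killed m)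
    (hop : ∀ i, ρ.op i n v ∈ ρ.killed m) : v ∈ ρ.killed (n + m) := by
  obtain ⟨-, hI, hP, hQ⟩ := mem_killed_iff.1 hv
  obtain ⟨-, hID, -, -⟩ := mem_killed_iff.1 (hop 0)
  obtain ⟨-, -, hPI, hQI⟩ := mem_killed_iff.1 (hop 1)
  obtain ⟨-, -, hPQ, -⟩ := mem_killed_iff.1 (hop 3)
  simp only [op, Matrix.cons_val] at hID hPI hQI hPQ
  have hI' : ρ.I (n + m) v = 0 := by
    have := ρ.D_I n m v
    rw [hI, hID, map_zero, zero_add] at this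
    exact (smul_eq_zero.1 this.symm).resolve_left (Int.cast_ne_zero.2 hm)
  rw [mem_killed_iff]
  refine ⟨?_, hI', ?_, ?_⟩
  · simpa [hP, hPQ, hI'] using (ρ.Q_P n m v).symm
  · simpa [hP, hPI] using (ρ.I_P n m v).symm
  · simpa [hQ, hQI] using (ρ.I_Q n m v).symm

theorem mem_killed_add_of_mem (hm : m ≠ 0) (hvn : v ∈ ρ.killed n) (hvm : v ∈ ρ.killed m) :
    v ∈ ρ.killed (n + m) :=
  mem_killed_add hm hvm fun i ↦ by simp [mem_killed.1 hvn i]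

theorem killed_one_le (hn : 0 < n) : ρ.killed 1 ≤ ρ.killed n := fun v hv ↦ by
  induction n, hn using Int.leInduction with
  | base => exact hv
  | succ n _ ih => exact mem_killed_add_of_mem one_ne_zero ih hv

theorem mem_locallyKilled_of_mem_killed_succ (hn : 0 < n) (hv : v ∈ ρ.killed n)
    (hv' : v ∈ ρ.killed (n + 1)) : v ∈ ρ.locallyKilled := by
  have hclosure : ∀ q : ℕ, 0 < q → ∀ r : ℕ, r ≤ q → v ∈ ρ.killed (q * n + r) := fun q hq ↦ by
    induction q, hq using Nat.le_induction with
    | base =>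
      intro r hr
      interval_cases r <;> simpa
    | succ q hq ih =>
      intro r hr
      rcases hr.lt_or_eq with hr | rfl
      · have := mem_killed_add_of_mem hn.ne' (ih r (by omega)) hv
        convert this using 2
        push_cast; ring
      · have := mem_killed_add_of_mem (by omega) (ih q le_rfl) hv'
        convert this using 2
        push_cast; ring
  refine mem_locallyKilled.2 ((eventually_ge_atTop (n * n)).mono fun k hk ↦ ?_)
  have hdiv : n ≤ k / n := (Int.le_ediv_iff_mul_le hn).2 hk
  have hmod := Int.emod_lt_of_pos k hn
  have hmod' := Int.emod_nonneg k hn.ne'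
  convert hclosure (k / n).toNat (by omega) (k % n).toNat (by omega) using 2
  rw [Int.toNat_of_nonneg (by omega), Int.toNat_of_nonneg hmod', mul_comm,
    Int.mul_ediv_add_emod]

/- Raising a vector of weight `μ` by operators of degree one until its weight is `μ + N`, any
operator of degree `-N` brings it back into the weight space `μ`, where the degrees `≥ N` act by
zero; so all positive degrees act by zero on it. -/
theorem exists_extremal_Ioi_ne_bot {N : ℕ} (hN : ∀ n : ℤ, N ≤ n → ρ.wt μ ≤ ρ.killed n)
    (hμ : ρ.wt μ ≠ ⊥) : ∃ ν, ρ.extremal (Set.Ioi 0) ν ≠ ⊥ := by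
  by_contra! hbot
  have not_killed {ν : K} {v : V} (hv : v ∈ ρ.wt ν) (hv0 : v ≠ 0) : ∃ n > 0, v ∉ ρ.killed n := by
    by_contra! h
    have hmem : v ∈ ρ.extremal (Set.Ioi 0) ν := mem_extremal.2 ⟨hv, h⟩
    rw [hbot, Submodule.mem_bot] at hmem
    exact hv0 hmem
  have hraise : ∀ k : ℕ, ∃ v ∈ ρ.wt (μ + k), v ≠ 0 ∧ ∀ n : ℤ, N ≤ n → v ∈ ρ.killed n := by
    intro k
    induction k with
    | zero =>
      obtain ⟨v, hv, hv0⟩ := (Submodule.ne_bot_iff _).1 hμ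
      exact ⟨v, by simpa using hv, hv0, fun n hn ↦ hN n hn hv⟩
    | succ k ih =>
      obtain ⟨v, hv, hv0, hkilled⟩ := ih
      obtain ⟨n, hn, hvn⟩ := not_killed hv hv0
      have hv1 : v ∉ ρ.killed 1 := fun h ↦ hvn (killed_one_le hn h)
      simp only [mem_killed, not_forall] at hv1
      obtain ⟨i, hi⟩ := hv1
      exact ⟨ρ.op i 1 v, op_mem_wt i hv (by push_cast; ring), hi,
        fun n hn ↦ op_mem_killed i (hkilled n hn) (hkilled _ (by omega))⟩
  obtain ⟨v, hv, hv0, hkilled⟩ := hraise N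
  obtain ⟨n, hn, hvn⟩ := not_killed hv hv0
  have hback : ∀ i, ρ.op i (-N) v ∈ ρ.killed (N + n) := fun i ↦
    hN _ (by omega) (op_mem_wt i hv (by push_cast; ring))
  refine hvn ?_
  simpa using mem_killed_add (by omega) (hkilled (N + n) (by omega)) hback

theorem IsSimple.exists_extremal_Ioi_ne_bot (hρ : ρ.IsSimple) (hv : v ∈ ρ.locallyKilled)
    (hv0 : v ≠ 0) (μ : K) [FiniteDimensional K (ρ.wt μ)] (hμ : ρ.wt μ ≠ ⊥) :
    ∃ ν, ρ.extremal (Set.Ioi 0) ν ≠ ⊥ := by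
  obtain ⟨N, hN⟩ := eventually_atTop.1 (hρ.eventually_wt_le_killed hv hv0 μ)
  exact SuperWittRep.exists_extremal_Ioi_ne_bot (N := N.toNat) (fun n hn ↦ hN n (by omega)) hμ

/- A vector killed in the degrees `j` and `j + 1` is killed in all large degrees, so the operators
of these two degrees embed the weight space `μ - j` into copies of the weight spaces `μ` and
`μ + 1`. -/
theorem IsSimple.finrank_wt_sub_le (hρ : ρ.IsSimple) [∀ μ, FiniteDimensional K (ρ.wt μ)]
    (hext : ∀ ν, ρ.extremal (Set.Ioi 0) ν = ⊥) (μ : K) (j : ℕ) :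
    Module.finrank K (ρ.wt (μ - j)) ≤
      4 * (Module.finrank K (ρ.wt μ) + Module.finrank K (ρ.wt (μ + 1))) := by
  rcases Nat.eq_zero_or_pos j with rfl | hj
  · rw [Nat.cast_zero, sub_zero]; omega
  let restrictOp (n : ℤ) (ν : K) (hν : μ - j + n = ν) (i : Fin 4) : ρ.wt (μ - j) →ₗ[K] ρ.wt ν :=
    (ρ.op i n).restrict fun _ hv ↦ op_mem_wt i hv hν
  let F : ρ.wt (μ - j) →ₗ[K] (Fin 4 → ρ.wt μ) × (Fin 4 → ρ.wt (μ + 1)) :=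
    (LinearMap.pi (restrictOp j μ (by push_cast; ring))).prod
      (LinearMap.pi (restrictOp (j + 1) (μ + 1) (by push_cast; ring)))
  have hF : Function.Injective F := by
    refine LinearMap.ker_eq_bot.1 (LinearMap.ker_eq_bot'.2 fun x hx ↦ ?_)
    by_contra hx0
    have hx0' : (x : V) ≠ 0 := by simpa using hx0
    have hkilled : (x : V) ∈ ρ.killed j := mem_killed.2 fun i ↦
      congrArg Subtype.val (congrFun (congrArg Prod.fst hx) i)
    have hkilled' : (x : V) ∈ ρ.killed (j + 1) := mem_killed.2 fun i ↦
      congrArg Subtype.val (congrFun (congrArg Prod.snd hx) i)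
    obtain ⟨ν, hν⟩ := hρ.exists_extremal_Ioi_ne_bot
      (mem_locallyKilled_of_mem_killed_succ (by omega) hkilled hkilled') hx0' (μ - j)
      ((Submodule.ne_bot_iff _).2 ⟨x, x.2, hx0'⟩)
    exact hν (hext ν)
  have := LinearMap.finrank_le_finrank_of_injective hF
  simp only [Module.finrank_prod, Module.finrank_pi_fintype, Finset.sum_const, Finset.card_univ,
    Fintype.card_fin, smul_eq_mul] at this
  omega

theorem IsSimple.exists_finrank_wt_add_intCast_le (hρ : ρ.IsSimple)
    [∀ μ, FiniteDimensional K (ρ.wt μ)] (hIoi : ∀ ν, ρ.extremal (Set.Ioi 0) ν = ⊥)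
    (hIio : ∀ ν, ρ.extremal (Set.Iio 0) ν = ⊥) (μ : K) :
    ∃ p : ℕ, ∀ k : ℤ, Module.finrank K (ρ.wt (μ + k)) ≤ p := by
  have (ν : K) : FiniteDimensional K (ρ.reverse.wt ν) := by rw [wt_reverse]; infer_instance
  refine ⟨max (4 * (Module.finrank K (ρ.reverse.wt (-μ)) +
      Module.finrank K (ρ.reverse.wt (-μ + 1))))
    (4 * (Module.finrank K (ρ.wt μ) + Module.finrank K (ρ.wt (μ + 1)))), fun k ↦ ?_⟩
  obtain ⟨j, rfl | rfl⟩ := k.eq_nat_or_neg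
  · refine le_max_of_le_left ?_
    have := hρ.reverse.finrank_wt_sub_le (fun ν ↦ by rw [extremal_reverse_Ioi, hIio]) (-μ) j
    rwa [wt_reverse ρ (-μ - j), neg_sub, sub_neg_eq_add, add_comm (j : K),
      ← Int.cast_natCast] at this
  · refine le_max_of_le_right ?_
    rw [Int.cast_neg, Int.cast_natCast, ← sub_eq_add_neg]
    exact hρ.finrank_wt_sub_le hIoi μ j

end CharZero

section AlgClosed

variable [IsAlgClosed K]

theorem exists_extremal_eigenvector [FiniteDimensional K (ρ.wt μ)] (hμ : ρ.extremal A μ ≠ ⊥)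
    (F : Module.End K V) (hF : ∀ v ∈ ρ.extremal A μ, F v ∈ ρ.extremal A μ)
    (hFF : ∀ v, F (F v) = 0) (hFI : ∀ v, F v = 0 → F (ρ.I 0 v) = 0)
    (hFσ : ∀ v, F v = 0 → F (ρ.σ v) = 0) :
    ∃ w ∈ ρ.extremal A μ, w ≠ 0 ∧ F w = 0 ∧ ∃ a ε : K, ρ.I 0 w = a • w ∧ ρ.σ w = ε • w := by
  have hfin {X : Submodule K V} (hX : X ≤ ρ.wt μ) : FiniteDimensional K X :=
    Submodule.finiteDimensional_of_le hX
  set X := ρ.extremal A μ ⊓ LinearMap.ker F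
  have hXwt : X ≤ ρ.wt μ := inf_le_left.trans inf_le_left
  have := hfin hXwt
  obtain ⟨a, ha⟩ := exists_inf_eigenspace_ne_bot (ρ.I 0) (inf_ker_ne_bot hμ hF hFF)
    fun v hv ↦ ⟨op_zero_mem_extremal 1 hv.1, hFI v hv.2⟩
  have := hfin (inf_le_left.trans hXwt : X ⊓ (ρ.I 0).eigenspace a ≤ ρ.wt μ)
  obtain ⟨ε, hε⟩ := exists_inf_eigenspace_ne_bot ρ.σ ha fun v hv ↦
    ⟨⟨σ_mem_extremal hv.1.1, hFσ v hv.1.2⟩, Module.End.mem_eigenspace_iff.2 <| by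
      rw [← ρ.σ_I, Module.End.mem_eigenspace_iff.1 hv.2, map_smul]⟩
  obtain ⟨w, ⟨⟨hwX, hwa⟩, hwε⟩, hw0⟩ := (Submodule.ne_bot_iff _).1 hε
  exact ⟨w, hwX.1, hw0, hwX.2, a, ε, Module.End.mem_eigenspace_iff.1 hwa,
    Module.End.mem_eigenspace_iff.1 hwε⟩

variable [CharZero K]

theorem exists_extremal_eigenvector_P [FiniteDimensional K (ρ.wt μ)] (hμ : ρ.extremal A μ ≠ ⊥) :
    ∃ w ∈ ρ.extremal A μ, w ≠ 0 ∧ ρ.P 0 w = 0 ∧ ∃ a ε : K, ρ.I 0 w = a • w ∧ ρ.σ w = ε • w :=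
  exists_extremal_eigenvector hμ (ρ.P 0) (fun _ ↦ op_zero_mem_extremal 2)
    (fun v ↦ ρ.P_P_self 0 v)
    (fun v hv ↦ by simpa [hv] using (ρ.I_P 0 0 v).symm)
    (fun v hv ↦ by simpa [hv] using (ρ.σ_P 0 v).symm)

theorem exists_extremal_eigenvector_Q [FiniteDimensional K (ρ.wt μ)] (hμ : ρ.extremal A μ ≠ ⊥) :
    ∃ w ∈ ρ.extremal A μ, w ≠ 0 ∧ ρ.Q 0 w = 0 ∧ ∃ a ε : K, ρ.I 0 w = a • w ∧ ρ.σ w = ε • w :=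
  exists_extremal_eigenvector hμ (ρ.Q 0) (fun _ ↦ op_zero_mem_extremal 3)
    (fun v ↦ ρ.Q_Q_self 0 v)
    (fun v hv ↦ by simpa [hv] using (ρ.I_Q 0 0 v).symm)
    (fun v hv ↦ by simpa [hv] using (ρ.σ_Q 0 v).symm)

end AlgClosed

end Extremal

section Vacuum

variable {h ε : K} {w : V} {X W : Submodule K V}

variable (ρ) in
/-- The vectors of `I 0`-eigenvalue `h` and parity `ε` killed by all `Q n`. On a simple module the
`P n` generate everything from this space, as creation operators do from a vacuum. -/
def vacuum (h ε : K) : Submodule K V :=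
  (ρ.I 0).eigenspace h ⊓ ρ.σ.eigenspace ε ⊓ ⨅ n, LinearMap.ker (ρ.Q n)

theorem mem_vacuum :
    v ∈ ρ.vacuum h ε ↔ ρ.I 0 v = h • v ∧ ρ.σ v = ε • v ∧ ∀ n, ρ.Q n v = 0 := by
  simp [vacuum, and_assoc]

theorem D_mem_vacuum (hv : v ∈ ρ.vacuum h ε) : ρ.D n v ∈ ρ.vacuum h ε := by
  rw [mem_vacuum] at *
  obtain ⟨hI, hσ, hQ⟩ := hv
  refine ⟨?_, by rw [ρ.σ_D, hσ, map_smul], fun m ↦ ?_⟩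
  · simpa [hI] using (ρ.D_I n 0 v).symm
  · simpa [hQ] using (ρ.D_Q n m v).symm

theorem I_mem_vacuum (hv : v ∈ ρ.vacuum h ε) : ρ.I n v ∈ ρ.vacuum h ε := by
  rw [mem_vacuum] at *
  obtain ⟨hI, hσ, hQ⟩ := hv
  refine ⟨by rw [ρ.I_I, hI, map_smul], by rw [ρ.σ_I, hσ, map_smul], fun m ↦ ?_⟩
  simpa [hQ] using (ρ.I_Q n m v).symm

theorem Q_P_of_mem_vacuum (hv : v ∈ ρ.vacuum h ε) (m n : ℤ) :
    ρ.Q m (ρ.P n v) = ρ.D (m + n) v + (m : K) • ρ.I (m + n) v := by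
  simp [ρ.Q_P, (mem_vacuum.1 hv).2.2 m]

theorem I_zero_P (hv : ρ.I 0 v = h • v) : ρ.I 0 (ρ.P n v) = (h + 1) • ρ.P n v := by
  rw [ρ.I_P, hv, map_smul, zero_add, add_smul, one_smul]

theorem I_zero_Q (hv : ρ.I 0 v = h • v) : ρ.I 0 (ρ.Q n v) = (h - 1) • ρ.Q n v := by
  rw [ρ.I_Q, hv, map_smul, zero_add, sub_smul, one_smul]

theorem σ_P_of_eq_smul (hv : ρ.σ v = ε • v) : ρ.σ (ρ.P n v) = -ε • ρ.P n v := by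
  rw [ρ.σ_P, hv, map_smul, neg_smul]

variable (ρ) in
/-- The smallest subspace containing `X` and stable under all `P n`. -/
def closureP (X : Submodule K V) : Submodule K V :=
  sInf {W | X ≤ W ∧ ∀ n, ∀ v ∈ W, ρ.P n v ∈ W}

theorem le_closureP : X ≤ ρ.closureP X := le_sInf fun _ hW ↦ hW.1

theorem closureP_le (hXW : X ≤ W) (hW : ∀ n, ∀ v ∈ W, ρ.P n v ∈ W) : ρ.closureP X ≤ W :=
  sInf_le ⟨hXW, hW⟩

theorem P_mem_closureP (hv : v ∈ ρ.closureP X) : ρ.P n v ∈ ρ.closureP X :=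
  mem_sInf.2 fun W hW ↦ hW.2 n v (mem_sInf.1 hv W hW)

theorem map_mem_closureP (T : Module.End K V) (hTX : ∀ v ∈ X, T v ∈ ρ.closureP X)
    (hTP : ∀ n, ∀ v ∈ ρ.closureP X, T v ∈ ρ.closureP X → T (ρ.P n v) ∈ ρ.closureP X)
    (hv : v ∈ ρ.closureP X) : T v ∈ ρ.closureP X :=
  (closureP_le (W := ρ.closureP X ⊓ (ρ.closureP X).comap T)
    (fun x hx ↦ ⟨le_closureP hx, hTX x hx⟩)
    (fun n x hx ↦ ⟨P_mem_closureP hx.1, hTP n x hx.1 hx.2⟩) hv).2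

theorem isInvariant_closureP (hX : X ≤ ρ.vacuum h ε) (hXD : ∀ n, ∀ v ∈ X, ρ.D n v ∈ X)
    (hXI : ∀ n, ∀ v ∈ X, ρ.I n v ∈ X) : ρ.IsInvariant (ρ.closureP X) := by
  have hD (m : ℤ) {v : V} : v ∈ ρ.closureP X → ρ.D m v ∈ ρ.closureP X :=
    map_mem_closureP _ (fun x hx ↦ le_closureP (hXD m x hx)) fun n x hx hDx ↦ by
      rw [ρ.D_P]
      exact add_mem (P_mem_closureP hDx) (smul_mem _ _ (P_mem_closureP hx))
  have hI (m : ℤ) {v : V} : v ∈ ρ.closureP X → ρ.I m v ∈ ρ.closureP X :=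
    map_mem_closureP _ (fun x hx ↦ le_closureP (hXI m x hx)) fun n x hx hIx ↦ by
      rw [ρ.I_P]
      exact add_mem (P_mem_closureP hIx) (P_mem_closureP hx)
  have hQ (m : ℤ) {v : V} : v ∈ ρ.closureP X → ρ.Q m v ∈ ρ.closureP X :=
    map_mem_closureP _ (fun x hx ↦ by simp [(mem_vacuum.1 (hX hx)).2.2 m]) fun n x hx hQx ↦ by
      rw [ρ.Q_P]
      exact add_mem (add_mem (neg_mem (P_mem_closureP hQx)) (hD _ hx)) (smul_mem _ _ (hI _ hx))
  have hσ {v : V} : v ∈ ρ.closureP X → ρ.σ v ∈ ρ.closureP X :=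
    map_mem_closureP _
      (fun x hx ↦ by rw [(mem_vacuum.1 (hX hx)).2.1]; exact smul_mem _ _ (le_closureP hx))
      fun n x _ hσx ↦ by
        rw [ρ.σ_P]
        exact neg_mem (P_mem_closureP hσx)
  refine ⟨fun i n v hv ↦ ?_, hσ⟩
  match i with
  | 0 => exact hD n hv
  | 1 => exact hI n hv
  | 2 => exact P_mem_closureP hv
  | 3 => exact hQ n hv

theorem IsSimple.eq_top_of_P_mem (hρ : ρ.IsSimple) (hX : X ≤ ρ.vacuum h ε)
    (hXD : ∀ n, ∀ v ∈ X, ρ.D n v ∈ X) (hXI : ∀ n, ∀ v ∈ X, ρ.I n v ∈ X) (hX0 : X ≠ ⊥)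
    (hXW : X ≤ W) (hW : ∀ n, ∀ v ∈ W, ρ.P n v ∈ W) : W = ⊤ := by
  obtain ⟨x, hx, hx0⟩ := (Submodule.ne_bot_iff _).1 hX0
  exact top_le_iff.1 <| (hρ.eq_top (isInvariant_closureP hX hXD hXI) (le_closureP hx) hx0).ge.trans
    (closureP_le hXW hW)

theorem IsSimple.exists_eq_add_natCast (hρ : ρ.IsSimple) (hvac : ρ.vacuum h ε ≠ ⊥) {c : K}
    (hw : ρ.I 0 w = c • w) (hw0 : w ≠ 0) : ∃ i : ℕ, c = h + i := by
  by_contra! hc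
  set W := ⨆ i : ℕ, (ρ.I 0).eigenspace (h + i)
  have hP : ∀ n, W ≤ W.comap (ρ.P n) := fun n ↦ iSup_le fun i x hx ↦
    mem_iSup_of_mem (i + 1) <| Module.End.mem_eigenspace_iff.2 <| by
      rw [I_zero_P (Module.End.mem_eigenspace_iff.1 hx), Nat.cast_succ, add_assoc]
  have htop : W = ⊤ := hρ.eq_top_of_P_mem le_rfl (fun n _ ↦ D_mem_vacuum) (fun n _ ↦ I_mem_vacuum)
    hvac (fun x hx ↦ mem_iSup_of_mem 0 (by simpa using (mem_vacuum.1 hx).1)) fun n _ hx ↦ hP n hx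
  have hle : W ≤ ⨆ d, ⨆ (_ : d ≠ c), (ρ.I 0).eigenspace d :=
    iSup_le fun i ↦ le_iSup₂_of_le (h + i : K) (hc i).symm le_rfl
  exact hw0 <| disjoint_def.1 ((ρ.I 0).eigenspaces_iSupIndep c) w
    (Module.End.mem_eigenspace_iff.2 hw) (hle (htop ▸ mem_top))

theorem IsSimple.vacuum_add_one_eq_bot [CharZero K] (hρ : ρ.IsSimple) (hvac : ρ.vacuum h ε ≠ ⊥)
    (ε' : K) : ρ.vacuum (h + 1) ε' = ⊥ := by
  by_contra hvac'
  obtain ⟨v, hv, hv0⟩ := (Submodule.ne_bot_iff _).1 hvac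
  obtain ⟨i, hi⟩ := hρ.exists_eq_add_natCast hvac' (mem_vacuum.1 hv).1 hv0
  have : ((1 + i : ℕ) : K) = 0 := by push_cast; linear_combination -hi
  have := Nat.cast_eq_zero.1 this
  omega

end Vacuum

section Density

variable {h ε l e : K} {x : ℤ → V}

/-- A sequence in the vacuum on which `D` and `I` act as on the tensor densities
`x m = t ^ (l + m) (dt / t) ^ e` twisted by the character `h`. -/
structure IsDensity (ρ : SuperWittRep K V) (h ε l e : K) (x : ℤ → V) : Prop where
  mem_vacuum (m : ℤ) : x m ∈ ρ.vacuum h ε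
  D_apply (a m : ℤ) : ρ.D a (x m) = (l + m + a * e) • x (m + a)
  I_apply (a m : ℤ) : ρ.I a (x m) = h • x (m + a)

namespace IsDensity

theorem σ_apply (hx : ρ.IsDensity h ε l e x) (k : ℤ) : ρ.σ (x k) = ε • x k :=
  (SuperWittRep.mem_vacuum.1 (hx.mem_vacuum k)).2.1

theorem mem_wt (hx : ρ.IsDensity h ε l e x) (k : ℤ) : x k ∈ ρ.wt (l + k) := by
  simpa [SuperWittRep.mem_wt] using hx.D_apply 0 k

theorem vacuum_ne_bot (hx : ρ.IsDensity h ε l e x) (hx0 : x ≠ 0) : ρ.vacuum h ε ≠ ⊥ := by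
  obtain ⟨k, hk⟩ := Function.ne_iff.1 hx0
  exact (Submodule.ne_bot_iff _).2 ⟨x k, hx.mem_vacuum k, hk⟩

theorem Q_P (hx : ρ.IsDensity h ε l e x) (m n k : ℤ) :
    ρ.Q m (ρ.P n (x (k - n))) = (l + k - n + (m + n) * e + m * h) • x (k + m) := by
  rw [Q_P_of_mem_vacuum (hx.mem_vacuum _), hx.D_apply, hx.I_apply,
    show k - n + (m + n) = k + m by ring]
  push_cast
  module

variable [CharZero K]

theorem neg_ne_self (hx : ρ.IsDensity h ε l e x) (hx0 : x ≠ 0) : -ε ≠ ε := by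
  obtain ⟨k, hk⟩ := Function.ne_iff.1 hx0
  rw [Ne, _root_.neg_eq_self]
  rintro rfl
  have hσ : ρ.σ (x k) = 0 := by rw [hx.σ_apply, zero_smul]
  exact hk (by rw [← ρ.σ_σ (x k), hσ, map_zero, Pi.zero_apply])

/- The matrix elements `Q m P n x (k - n)` are affine in `n`. -/
theorem P_apply (hx : ρ.IsDensity h ε l e x) (hρ : ρ.IsSimple) (hx0 : x ≠ 0) (n k : ℤ) :
    ρ.P n (x (k - n)) = (1 - n : K) • ρ.P 0 (x k) + (n : K) • ρ.P 1 (x (k - 1)) := by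
  rw [← sub_eq_zero, ← Submodule.mem_bot K, ← hρ.vacuum_add_one_eq_bot (hx.vacuum_ne_bot hx0) (-ε)]
  have hP (a b : ℤ) : ρ.P a (x b) ∈ (ρ.I 0).eigenspace (h + 1) ⊓ ρ.σ.eigenspace (-ε) :=
    ⟨Module.End.mem_eigenspace_iff.2 <|
        I_zero_P (SuperWittRep.mem_vacuum.1 (hx.mem_vacuum b)).1,
      Module.End.mem_eigenspace_iff.2 <| σ_P_of_eq_smul (hx.σ_apply b)⟩
  refine ⟨sub_mem (hP _ _) (add_mem (smul_mem _ _ (hP _ _)) (smul_mem _ _ (hP _ _))),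
    mem_iInf _ |>.2 fun m ↦ ?_⟩
  have hQ_P0 := hx.Q_P m 0 k
  rw [sub_zero] at hQ_P0
  simp only [LinearMap.mem_ker, map_sub, map_add, map_smul, hx.Q_P, hQ_P0]
  push_cast
  module

theorem P_P_apply (hx : ρ.IsDensity h ε l e x) (hρ : ρ.IsSimple) (hx0 : x ≠ 0) (m n k : ℤ) :
    ρ.P m (ρ.P n (x (k - m - n))) = (n - m : K) • ρ.P 0 (ρ.P 1 (x (k - 1))) := by
  have expand (m n : ℤ) : ρ.P m (ρ.P n (x (k - m - n))) =
      (1 - n : K) • ρ.P m (ρ.P 0 (x (k - m))) + (n : K) • ρ.P m (ρ.P 1 (x (k - m - 1))) := by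
    rw [hx.P_apply hρ hx0, map_add, map_smul, map_smul]
  have hP0 : ρ.P 0 (ρ.P m (x (k - m))) = (m : K) • ρ.P 0 (ρ.P 1 (x (k - 1))) := by
    simpa [ρ.P_P_self] using expand 0 m
  have hP1 : ρ.P 1 (ρ.P m (x (k - 1 - m))) = (m - 1 : K) • ρ.P 0 (ρ.P 1 (x (k - 1))) := by
    simpa [ρ.P_P_self, ρ.P_P 1 0, ← neg_smul] using expand 1 m
  rw [expand m n, ρ.P_P m 0, ρ.P_P m 1, hP0, sub_right_comm k m 1, hP1]
  module

theorem P_P_P_apply (hx : ρ.IsDensity h ε l e x) (hρ : ρ.IsSimple) (hx0 : x ≠ 0) (m k : ℤ) :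
    ρ.P m (ρ.P 0 (ρ.P 1 (x (k - 1)))) = 0 := by
  have := hx.P_P_apply hρ hx0 m (m + 1) k
  push_cast at this
  rw [add_sub_cancel_left, one_smul] at this
  rw [← this, ρ.P_P_self]

end IsDensity

variable (ρ) in
/-- The vectors of weight `l + k` and parity `ε` built from a density `x` with these parameters. -/
def sameParityPart (x : ℤ → V) (k : ℤ) : Submodule K V :=
  span K {x k, ρ.P 0 (ρ.P 1 (x (k - 1)))}

variable (ρ) in
/-- The vectors of weight `l + k` and parity `-ε` built from a density `x` with these parameters. -/
def oppositeParityPart (x : ℤ → V) (k : ℤ) : Submodule K V :=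
  span K {ρ.P 0 (x k), ρ.P 1 (x (k - 1))}

namespace IsDensity

theorem sameParityPart_le (hx : ρ.IsDensity h ε l e x) (k : ℤ) :
    ρ.sameParityPart x k ≤ ρ.wt (l + k) ⊓ ρ.σ.eigenspace ε := by
  refine span_le.2 (Set.pair_subset ⟨hx.mem_wt k, Module.End.mem_eigenspace_iff.2 (hx.σ_apply k)⟩
    ⟨P_mem_wt (P_mem_wt (hx.mem_wt _) rfl) (by push_cast; ring), ?_⟩)
  refine Module.End.mem_eigenspace_iff.2 ?_
  simpa using σ_P_of_eq_smul (n := 0) (σ_P_of_eq_smul (n := 1) (hx.σ_apply (k - 1)))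

theorem oppositeParityPart_le (hx : ρ.IsDensity h ε l e x) (k : ℤ) :
    ρ.oppositeParityPart x k ≤ ρ.wt (l + k) ⊓ ρ.σ.eigenspace (-ε) :=
  span_le.2 <| Set.pair_subset
    ⟨P_mem_wt (hx.mem_wt _) (by simp),
      Module.End.mem_eigenspace_iff.2 (σ_P_of_eq_smul (hx.σ_apply _))⟩
    ⟨P_mem_wt (hx.mem_wt _) (by push_cast; ring),
      Module.End.mem_eigenspace_iff.2 (σ_P_of_eq_smul (hx.σ_apply _))⟩

variable [CharZero K]

theorem P_mem_iSup_parts (hx : ρ.IsDensity h ε l e x) (hρ : ρ.IsSimple) (hx0 : x ≠ 0) (n : ℤ)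
    {v : V} (hv : v ∈ (⨆ k, ρ.sameParityPart x k) ⊔ ⨆ k, ρ.oppositeParityPart x k) :
    ρ.P n v ∈ (⨆ k, ρ.sameParityPart x k) ⊔ ⨆ k, ρ.oppositeParityPart x k := by
  set W := (⨆ k, ρ.sameParityPart x k) ⊔ ⨆ k, ρ.oppositeParityPart x k
  have hsame (k : ℤ) : ρ.sameParityPart x k ≤ W := (le_iSup _ k).trans le_sup_left
  have hopp (k : ℤ) : ρ.oppositeParityPart x k ≤ W := (le_iSup _ k).trans le_sup_right
  have hPP (m n k : ℤ) : ρ.P m (ρ.P n (x (k - m - n))) ∈ W := by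
    rw [hx.P_P_apply hρ hx0]
    exact smul_mem _ _ (hsame k (mem_span_of_mem (by simp)))
  refine (sup_le (iSup_le fun k ↦ span_le.2 ?_) (iSup_le fun k ↦ span_le.2 ?_) :
    W ≤ W.comap (ρ.P n)) hv
  · refine Set.pair_subset (mem_comap.2 ?_) (mem_comap.2 ?_)
    · have hP := hx.P_apply hρ hx0 n (k + n)
      rw [add_sub_cancel_right] at hP
      rw [hP]
      exact hopp (k + n) (add_mem (smul_mem _ _ (mem_span_of_mem (by simp)))
        (smul_mem _ _ (mem_span_of_mem (by simp))))
    · rw [hx.P_P_P_apply hρ hx0]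
      exact zero_mem _
  · refine Set.pair_subset (mem_comap.2 ?_) (mem_comap.2 ?_)
    · simpa using hPP n 0 (k + n)
    · simpa using hPP n 1 (k + n)

theorem iSup_parts_eq_top (hx : ρ.IsDensity h ε l e x) (hρ : ρ.IsSimple) (hx0 : x ≠ 0) :
    (⨆ k, ρ.sameParityPart x k) ⊔ ⨆ k, ρ.oppositeParityPart x k = ⊤ := by
  have hmap (T : Module.End K V) (hT : ∀ k, T (x k) ∈ span K (Set.range x)) :
      span K (Set.range x) ≤ (span K (Set.range x)).comap T :=
    span_le.2 (Set.range_subset_iff.2 hT)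
  have hmem (k : ℤ) : x k ∈ span K (Set.range x) := mem_span_of_mem ⟨k, rfl⟩
  refine hρ.eq_top_of_P_mem (X := span K (Set.range x))
    (span_le.2 (Set.range_subset_iff.2 hx.mem_vacuum))
    (fun n _ hv ↦ hmap (ρ.D n) (fun k ↦ hx.D_apply n k ▸ smul_mem _ _ (hmem _)) hv)
    (fun n _ hv ↦ hmap (ρ.I n) (fun k ↦ hx.I_apply n k ▸ smul_mem _ _ (hmem _)) hv)
    (fun hbot ↦ hx0 (funext fun k ↦ by simpa [hbot] using hmem k))
    (span_le.2 (Set.range_subset_iff.2 fun k ↦ ?_)) (fun n v ↦ hx.P_mem_iSup_parts hρ hx0 n)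
  exact mem_sup_left (mem_iSup_of_mem k (mem_span_of_mem (by simp)))

theorem rank_wt_inf_eigenspace_σ_le_two (hx : ρ.IsDensity h ε l e x) (hρ : ρ.IsSimple)
    (hx0 : x ≠ 0) (μ δ : K) : Module.rank K ↥(ρ.wt μ ⊓ ρ.σ.eigenspace δ) ≤ 2 := by
  have hpair (v w : V) : Module.rank K (span K {v, w}) ≤ 2 :=
    (rank_span_le _).trans <| Cardinal.mk_insert_le.trans <| by
      rw [Cardinal.mk_singleton, one_add_one_eq_two]
  refine rank_eigenspace_inf_eigenspace_le (T := ρ.D 0) (S := ρ.σ)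
    (X := Sum.elim (ρ.sameParityPart x) (ρ.oppositeParityPart x))
    (f := Sum.elim (fun k : ℤ ↦ l + k) (fun k : ℤ ↦ l + k))
    (g := Sum.elim (fun _ ↦ ε) (fun _ ↦ -ε)) ?_ ?_ ?_ ?_ μ δ
  · have hε := hx.neg_ne_self hx0
    rintro (i | i) (j | j) hij <;> simp_all [eq_comm]
  · rintro (k | k)
    exacts [hx.sameParityPart_le k, hx.oppositeParityPart_le k]
  · rw [iSup_sum]
    exact hx.iSup_parts_eq_top hρ hx0
  · rintro (k | k)
    exacts [hpair _ _, hpair _ _]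

end IsDensity

end Density

section Cover

variable {h ε l : K} {b : ℤ} {u : V} {x : ℤ → V}

variable (ρ) in
/-- The action of `D a` on sequences, recentred so that it annihilates, for `a = 0`, the sequences
whose `m`-th term has weight `l + m`. -/
def shiftD (l : K) (a : ℤ) : Module.End K (ℤ → V) :=
  LinearMap.pi fun m ↦ ρ.D a ∘ₗ LinearMap.proj (m - a) - (l + m - a : K) • LinearMap.proj m

variable (ρ) in
/-- The action of `I a` on sequences whose `m`-th term is thought of as having degree `m`. -/
def shiftI (a : ℤ) : Module.End K (ℤ → V) :=
  LinearMap.pi fun m ↦ ρ.I a ∘ₗ LinearMap.proj (m - a)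

variable (ρ) in
/-- The vector `u`, placed in degree `a`, viewed as the sequence of its images under the `Q n`. -/
def coverMap (a : ℤ) : V →ₗ[K] ℤ → V := LinearMap.pi fun m ↦ ρ.Q (m - a)

variable (ρ) in
/-- A finite-dimensional substitute for the vacuum vectors of weights in `l + ℤ`: the span of the
sequences of their images under the operators `Q m P n` of fixed total degree. -/
def cover (h ε l : K) : Submodule K (ℤ → V) :=
  span K {x | ∃ a n : ℤ, ∃ v ∈ ρ.vacuum h ε ⊓ ρ.wt (l + a - n), ρ.coverMap a (ρ.P n v) = x}

@[simp]
theorem shiftD_apply (m : ℤ) :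
    ρ.shiftD l a x m = ρ.D a (x (m - a)) - (l + m - a) • x m := rfl

@[simp]
theorem shiftI_apply (m : ℤ) : ρ.shiftI a x m = ρ.I a (x (m - a)) := rfl

@[simp]
theorem coverMap_apply (m : ℤ) : ρ.coverMap a u m = ρ.Q (m - a) u := rfl

theorem shiftD_shiftD (a b : ℤ) (x : ℤ → V) : ρ.shiftD l a (ρ.shiftD l b x) =
    ρ.shiftD l b (ρ.shiftD l a x) + (a : K) • ρ.shiftD l a x - (b : K) • ρ.shiftD l b x +
      (b - a : K) • ρ.shiftD l (a + b) x := by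
  ext m
  simp only [Pi.add_apply, Pi.sub_apply, Pi.smul_apply, shiftD_apply, map_sub, map_smul,
    ρ.D_D a b, sub_right_comm m b a, ← sub_sub m a b]
  push_cast
  module

theorem shiftD_shiftI (a b : ℤ) (x : ℤ → V) : ρ.shiftD l a (ρ.shiftI b x) =
    ρ.shiftI b (ρ.shiftD l a x) + (b : K) • (ρ.shiftI (a + b) x - ρ.shiftI b x) := by
  ext m
  simp only [Pi.add_apply, Pi.sub_apply, Pi.smul_apply, shiftD_apply, shiftI_apply, map_sub,
    map_smul, ρ.D_I a b, sub_right_comm m b a, ← sub_sub m a b]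
  push_cast
  module

theorem shiftD_coverMap :
    ρ.shiftD l b (ρ.coverMap a u) = ρ.coverMap (a + b) (ρ.D b u) - (l + a) • ρ.coverMap a u := by
  ext m
  simp only [shiftD_apply, coverMap_apply, Pi.sub_apply, Pi.smul_apply, ρ.D_Q,
    show b + (m - b - a) = m - a by ring, show m - (a + b) = m - b - a by ring]
  push_cast
  module

theorem shiftI_coverMap :
    ρ.shiftI b (ρ.coverMap a u) = ρ.coverMap (a + b) (ρ.I b u) - ρ.coverMap a u := by
  ext m
  simp only [shiftI_apply, coverMap_apply, Pi.sub_apply, ρ.I_Q,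
    show b + (m - b - a) = m - a by ring, show m - (a + b) = m - b - a by ring]

theorem coverMap_P_mem_cover (hv : v ∈ ρ.vacuum h ε) (hvν : v ∈ ρ.wt ν) (hν : ν + n = l + a) :
    ρ.coverMap a (ρ.P n v) ∈ ρ.cover h ε l :=
  mem_span_of_mem ⟨a, n, v, ⟨hv, eq_sub_of_add_eq hν ▸ hvν⟩, rfl⟩

theorem shiftD_mem_cover (b : ℤ) : ρ.cover h ε l ≤ (ρ.cover h ε l).comap (ρ.shiftD l b) := by
  refine span_le.2 ?_
  rintro _ ⟨a, n, v, ⟨hv, hvl⟩, rfl⟩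
  rw [SetLike.mem_coe, mem_comap, shiftD_coverMap, ρ.D_P, map_add, map_smul]
  refine sub_mem (add_mem ?_ (smul_mem _ _ ?_))
    (smul_mem _ _ (coverMap_P_mem_cover hv hvl (by ring)))
  · exact coverMap_P_mem_cover (D_mem_vacuum hv) (D_mem_wt hvl rfl) (by push_cast; ring)
  · exact coverMap_P_mem_cover hv hvl (by push_cast; ring)

theorem shiftI_mem_cover (b : ℤ) : ρ.cover h ε l ≤ (ρ.cover h ε l).comap (ρ.shiftI b) := by
  refine span_le.2 ?_
  rintro _ ⟨a, n, v, ⟨hv, hvl⟩, rfl⟩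
  rw [SetLike.mem_coe, mem_comap, shiftI_coverMap, ρ.I_P, map_add]
  refine sub_mem (add_mem ?_ ?_) (coverMap_P_mem_cover hv hvl (by ring))
  · exact coverMap_P_mem_cover (I_mem_vacuum hv) (I_mem_wt hvl rfl) (by push_cast; ring)
  · exact coverMap_P_mem_cover hv hvl (by push_cast; ring)

theorem apply_mem_of_mem_cover (hx : x ∈ ρ.cover h ε l) (m : ℤ) :
    x m ∈ ρ.vacuum h ε ⊓ ρ.wt (l + m) := by
  have hle : ρ.cover h ε l ≤ (ρ.vacuum h ε ⊓ ρ.wt (l + m)).comap (LinearMap.proj m) := by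
    refine span_le.2 ?_
    rintro _ ⟨a, n, v, ⟨hv, hvl⟩, rfl⟩
    refine ⟨?_, Q_mem_wt (P_mem_wt hvl rfl) (by push_cast; ring)⟩
    change ρ.Q (m - a) (ρ.P n v) ∈ ρ.vacuum h ε
    rw [Q_P_of_mem_vacuum hv]
    exact add_mem (D_mem_vacuum hv) (smul_mem _ _ (I_mem_vacuum hv))
  exact hle hx

theorem coverMap_P_eq (hv : v ∈ ρ.vacuum h ε) : ρ.coverMap a (ρ.P n v) =
    (1 - a : K) • ρ.coverMap 0 (ρ.P (n - a) v) + (a : K) • ρ.coverMap 1 (ρ.P (n - a + 1) v) := by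
  ext m
  simp only [coverMap_apply, Pi.add_apply, Pi.smul_apply, Q_P_of_mem_vacuum hv,
    show m - 0 + (n - a) = m - a + n by ring, show m - 1 + (n - a + 1) = m - a + n by ring]
  push_cast
  module

/- The terms of `coverMap a (P n v)` with `n - a` fixed depend on `a` in an affine way. -/
theorem finiteDimensional_cover [FiniteDimensional K (ρ.wt l)]
    [FiniteDimensional K (ρ.wt (l + 1))] : FiniteDimensional K (ρ.cover h ε l) := by
  refine Submodule.finiteDimensional_of_le
    (S₂ := (ρ.wt l).map (ρ.coverMap 0) ⊔ (ρ.wt (l + 1)).map (ρ.coverMap 1)) (span_le.2 ?_)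
  rintro _ ⟨a, n, v, ⟨hv, hvl⟩, rfl⟩
  rw [SetLike.mem_coe, coverMap_P_eq hv]
  exact add_mem
    (mem_sup_left (smul_mem _ _ (mem_map_of_mem (P_mem_wt hvl (by push_cast; ring)))))
    (mem_sup_right (smul_mem _ _ (mem_map_of_mem (P_mem_wt hvl (by push_cast; ring)))))

theorem twistedPair_cover (ρ : SuperWittRep K V) (h ε l : K) :
    TwistedPair (fun a ↦ (ρ.shiftD l a).restrict (shiftD_mem_cover (h := h) (ε := ε) a))
      (fun a ↦ (ρ.shiftI a).restrict (shiftI_mem_cover (l := l) a)) h where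
  E_zero x := by
    ext m
    have := mem_wt.1 (apply_mem_of_mem_cover x.2 m).2
    simp [this]
  J_zero x := by
    ext m
    have := (mem_vacuum.1 (apply_mem_of_mem_cover x.2 m).1).1
    simp [this]
  E_E a b x := Subtype.ext (shiftD_shiftD (ρ := ρ) (l := l) a b x)
  E_J a b x := Subtype.ext (shiftD_shiftI (ρ := ρ) (l := l) a b x)

variable [CharZero K]

theorem IsSimple.cover_ne_bot (hρ : ρ.IsSimple) (hl : ρ.vacuum h ε ⊓ ρ.wt l ≠ ⊥) :
    ρ.cover h ε l ≠ ⊥ := by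
  obtain ⟨v, ⟨hv, hvl⟩, hv0⟩ := (Submodule.ne_bot_iff _).1 hl
  intro hbot
  have hQP (m n : ℤ) : ρ.Q m (ρ.P n v) = 0 := by
    have hmem : ρ.coverMap n (ρ.P n v) ∈ ρ.cover h ε l := coverMap_P_mem_cover hv hvl rfl
    rw [hbot, Submodule.mem_bot] at hmem
    simpa using congrFun hmem (m + n)
  have hI (k : ℤ) : ρ.I k v = 0 := by
    have h0 := hQP 0 k
    have h1 := hQP 1 (k - 1)
    rw [Q_P_of_mem_vacuum hv] at h0 h1
    simp_all
  have hD (k : ℤ) : ρ.D k v = 0 := by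
    have := hQP 0 k
    rw [Q_P_of_mem_vacuum hv] at this
    simpa [hI] using this
  have hP (n : ℤ) : ρ.P n v = 0 := by
    have hmem : ρ.P n v ∈ ρ.vacuum (h + 1) (-ε) := mem_vacuum.2
      ⟨I_zero_P (mem_vacuum.1 hv).1, σ_P_of_eq_smul (mem_vacuum.1 hv).2.1, (hQP · n)⟩
    rwa [hρ.vacuum_add_one_eq_bot (ne_bot_of_le_ne_bot hl inf_le_left)] at hmem
  exact hv0 <| hρ.eq_zero_of_forall_mem_killed fun n ↦
    mem_killed_iff.2 ⟨hD n, hI n, hP n, (mem_vacuum.1 hv).2.2 n⟩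

theorem IsSimple.exists_isDensity [IsAlgClosed K] (hρ : ρ.IsSimple)
    (hl : ρ.vacuum h ε ⊓ ρ.wt l ≠ ⊥) [FiniteDimensional K (ρ.wt l)]
    [FiniteDimensional K (ρ.wt (l + 1))] :
    ∃ (e : K) (x : ℤ → V), x ≠ 0 ∧ ρ.IsDensity h ε l e x := by
  have : FiniteDimensional K (ρ.cover h ε l) := finiteDimensional_cover
  have : Nontrivial (ρ.cover h ε l) := Submodule.nontrivial_iff_ne_bot.2 (hρ.cover_ne_bot hl)
  obtain ⟨e, x, hx0, hx⟩ := (twistedPair_cover ρ h ε l).exists_common_eigenvector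
  refine ⟨e, x, by simpa using hx0, fun m ↦ (apply_mem_of_mem_cover x.2 m).1,
    fun a m ↦ ?_, fun a m ↦ ?_⟩
  · have hxa : ρ.shiftD l a x (m + a) = (a * e) • (x : ℤ → V) (m + a) :=
      congrFun (congrArg Subtype.val (hx a).1) _
    rw [shiftD_apply, add_sub_cancel_right, sub_eq_iff_eq_add] at hxa
    rw [hxa]
    push_cast
    module
  · simpa using congrFun (congrArg Subtype.val (hx a).2) (m + a)

end Cover

section JointWt

variable {h : K}

variable (ρ) in
/-- The weight space of the Cartan subalgebra spanned by `D 0` and `I 0`. -/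
def jointWt (h μ : K) : Submodule K V := ρ.wt μ ⊓ (ρ.I 0).eigenspace h

theorem mem_jointWt : v ∈ ρ.jointWt h μ ↔ v ∈ ρ.wt μ ∧ ρ.I 0 v = h • v := by
  simp [jointWt]

theorem D_mem_jointWt (hv : v ∈ ρ.jointWt h μ) (hν : μ + n = ν) : ρ.D n v ∈ ρ.jointWt h ν := by
  rw [mem_jointWt] at *
  refine ⟨D_mem_wt hv.1 hν, ?_⟩
  simpa [hv.2] using (ρ.D_I n 0 v).symm

theorem Q_mem_jointWt (hv : v ∈ ρ.jointWt h μ) (hν : μ + n = ν) :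
    ρ.Q n v ∈ ρ.jointWt (h - 1) ν := by
  rw [mem_jointWt] at *
  exact ⟨Q_mem_wt hv.1 hν, I_zero_Q hv.2⟩

theorem σ_mem_jointWt (hv : v ∈ ρ.jointWt h μ) : ρ.σ v ∈ ρ.jointWt h μ := by
  rw [mem_jointWt] at *
  exact ⟨σ_mem_wt hv.1, by rw [← ρ.σ_I, hv.2, map_smul]⟩

variable [CharZero K]

/- `D (-n)` and `D n` cannot both annihilate a vector of weight `μ ≠ 0`, since their commutator is
`2 * n * D 0`. -/
theorem jointWt_add_ne_bot_or_sub_ne_bot (hv : ρ.jointWt h μ ≠ ⊥) (hμ : μ ≠ 0) (hn : n ≠ 0) :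
    ρ.jointWt h (μ + n) ≠ ⊥ ∨ ρ.jointWt h (μ - n) ≠ ⊥ := by
  by_contra! hbot
  obtain ⟨v, hv, hv0⟩ := (Submodule.ne_bot_iff _).1 hv
  have hDn : ρ.D n v = 0 := (Submodule.mem_bot K).1 (hbot.1 ▸ D_mem_jointWt hv rfl)
  have hDn' : ρ.D (-n) v = 0 := (Submodule.mem_bot K).1
    (hbot.2 ▸ D_mem_jointWt hv (by rw [Int.cast_neg, ← sub_eq_add_neg]))
  have hcomm := ρ.D_D (-n) n v
  rw [hDn, hDn', map_zero, map_zero, zero_add, neg_add_cancel, mem_wt.1 hv.1, eq_comm] at hcomm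
  simp [hv0, hμ, ← two_mul, hn] at hcomm

theorem finite_setOf_jointWt_sub_ne_bot [∀ μ, FiniteDimensional K (ρ.wt μ)] {p : ℕ}
    (hp : ∀ k : ℤ, Module.finrank K (ρ.wt (μ + k)) ≤ p) (h : K) :
    {j : ℕ | ∃ k : ℤ, ρ.jointWt (h - j) (μ + k) ≠ ⊥}.Finite := by
  classical
  by_contra hinf
  obtain ⟨F, hF, hcard⟩ :=
    Set.Infinite.exists_subset_card_eq hinf (Module.finrank K (ρ.wt 0) + 2 * p + 1)
  have hinj : Function.Injective fun j : ℕ ↦ h - j := fun i j hij ↦ by simpa using hij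
  have hzero : (F.filter fun j : ℕ ↦ ρ.jointWt (h - j) 0 ≠ ⊥).card ≤ Module.finrank K (ρ.wt 0) :=
    card_le_finrank_of_inf_eigenspace_ne_bot (ρ.I 0) (ρ.wt 0) _ hinj fun j hj ↦
      (Finset.mem_filter.1 hj).2
  have hnonzero : (F.filter fun j : ℕ ↦ ¬ρ.jointWt (h - j) 0 ≠ ⊥).card ≤ 2 * p := by
    refine card_le_two_mul_of_symmetric_rows _ (fun (j : ℕ) k ↦ ρ.jointWt (h - j) (μ + k) ≠ ⊥) p
      (fun k R hR ↦ ?_) fun j hj ↦ ?_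
    · exact (card_le_finrank_of_inf_eigenspace_ne_bot (ρ.I 0) _ R hinj hR).trans (hp k)
    · rw [Finset.mem_filter, not_not] at hj
      obtain ⟨k, hk⟩ := hF hj.1
      have hμk : μ + k ≠ 0 := fun h0 ↦ hk (h0 ▸ hj.2)
      refine ⟨k, fun n hn ↦ ?_⟩
      have := jointWt_add_ne_bot_or_sub_ne_bot hk hμk hn.ne'
      push_cast
      rwa [← add_assoc, ← add_sub_assoc]
  have := F.card_filter_add_card_filter_not (fun j : ℕ ↦ ρ.jointWt (h - j) 0 ≠ ⊥)
  omega

theorem exists_vacuum_inf_wt_ne_bot [IsAlgClosed K] [∀ μ, FiniteDimensional K (ρ.wt μ)] {p : ℕ}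
    (hp : ∀ k : ℤ, Module.finrank K (ρ.wt (μ + k)) ≤ p) (hμ : ρ.wt μ ≠ ⊥) :
    ∃ h ε l, ρ.vacuum h ε ⊓ ρ.wt l ≠ ⊥ := by
  obtain ⟨h, hh⟩ := exists_inf_eigenspace_ne_bot (ρ.I 0) hμ fun v hv ↦ I_mem_wt hv (by simp)
  obtain ⟨j, ⟨k, hk⟩, hmax⟩ := (finite_setOf_jointWt_sub_ne_bot hp h).exists_maximal
    ⟨0, 0, by simpa [jointWt] using hh⟩
  have : FiniteDimensional K (ρ.jointWt (h - j) (μ + k)) :=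
    Submodule.finiteDimensional_of_le inf_le_left
  obtain ⟨ε, hε⟩ := exists_inf_eigenspace_ne_bot ρ.σ hk fun v ↦ σ_mem_jointWt
  obtain ⟨v, ⟨hv, hvε⟩, hv0⟩ := (Submodule.ne_bot_iff _).1 hε
  refine ⟨h - j, ε, μ + k, (Submodule.ne_bot_iff _).2 ⟨v, ⟨⟨⟨hv.2, hvε⟩, ?_⟩, hv.1⟩, hv0⟩⟩
  refine mem_iInf _ |>.2 fun n ↦ LinearMap.mem_ker.2 ?_
  by_contra hQ
  have hQv : ρ.Q n v ∈ ρ.jointWt (h - (j + 1 : ℕ)) (μ + (k + n : ℤ)) := by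
    convert Q_mem_jointWt hv rfl using 2
    · push_cast; ring
    · push_cast; ring
  have := hmax (y := j + 1) ⟨k + n, (Submodule.ne_bot_iff _).2 ⟨_, hQv, hQ⟩⟩ (by simp)
  omega

end JointWt

theorem IsSimple.extremal_ne_bot_or_rank_le_two [CharZero K] [IsAlgClosed K] (hρ : ρ.IsSimple)
    [∀ μ, FiniteDimensional K (ρ.wt μ)] {l : K} (hl : ρ.wt l ≠ ⊥) :
    (∃ ν, ρ.extremal (Set.Ioi 0) ν ≠ ⊥) ∨ (∃ ν, ρ.extremal (Set.Iio 0) ν ≠ ⊥) ∨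
      ∀ μ δ, Module.rank K ↥(ρ.wt μ ⊓ ρ.σ.eigenspace δ) ≤ 2 := by
  rw [or_iff_not_imp_left, or_iff_not_imp_left]
  intro hIoi hIio μ δ
  push Not at hIoi hIio
  obtain ⟨p, hp⟩ := hρ.exists_finrank_wt_add_intCast_le hIoi hIio l
  obtain ⟨h, ε, l', hvac⟩ := exists_vacuum_inf_wt_ne_bot hp hl
  obtain ⟨e, x, hx0, hx⟩ := hρ.exists_isDensity hvac
  exact hx.rank_wt_inf_eigenspace_σ_le_two hρ hx0 μ δ

end SuperWittRep

namespace RamondRep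

variable {V : Type} [AddCommGroup V] [Module ℂ V] (ρ : RamondRep V)

/- With the stated signs of the central terms, the Jacobi identity for `L (-2)`, `Gp 2` and `Gm 0`
leaves the central term `2 * c₀`. -/
theorem c₀_eq_zero {v : V} (hv : v ≠ 0) : ρ.c₀ = 0 := by
  have hGG := congrArg (ρ.L (-2)) (ρ.rel_GpGm 2 0 v)
  have hGGL := ρ.rel_GpGm 2 0 (ρ.L (-2) v)
  have hGG₀₀ := ρ.rel_GpGm 0 0 v
  have hGG₂₂ := ρ.rel_GpGm 2 (-2) v
  have hLGpGm := ρ.rel_LGp (-2) 2 (ρ.Gm 0 v)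
  have hGpLGm := congrArg (ρ.Gp 2) (ρ.rel_LGm (-2) 0 v)
  have hLGmGp := ρ.rel_LGm (-2) 0 (ρ.Gp 2 v)
  have hGmLGp := congrArg (ρ.Gm 0) (ρ.rel_LGp (-2) 2 v)
  have hLL := ρ.rel_LL (-2) 2 v
  have hLH := ρ.rel_LH (-2) 2 v
  norm_num [map_add, map_sub, map_smul] at hGG hGGL hGG₀₀ hGG₂₂ hLGpGm hGpLGm hLGmGp hGmLGp hLL hLH
  have hcentral : (2 * ρ.c₀) • v = 0 := by
    linear_combination (norm := module) hGG - hGGL - (3 : ℂ) • hGG₀₀ - hGG₂₂ - hLGpGm - hGpLGm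
      - hLGmGp - hGmLGp - (2 : ℂ) • hLL + (2 : ℂ) • hLH
  simpa [hv] using hcentral

section ParityOp

/-- The parity operator, which is `1` on even and `-1` on odd vectors. -/
noncomputable def parityOp : Module.End ℂ V :=
  LinearMap.ofIsCompl ρ.grading ρ.even.subtype (-ρ.odd.subtype)

variable {ρ} {v : V}

theorem parityOp_of_mem_even (hv : v ∈ ρ.even) : ρ.parityOp v = v :=
  LinearMap.ofIsCompl_apply_left ρ.grading ⟨v, hv⟩

theorem parityOp_of_mem_odd (hv : v ∈ ρ.odd) : ρ.parityOp v = -v :=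
  LinearMap.ofIsCompl_apply_right ρ.grading ⟨v, hv⟩

variable (ρ) in
theorem exists_even_add_odd_eq (v : V) : ∃ x ∈ ρ.even, ∃ y ∈ ρ.odd, x + y = v :=
  mem_sup.1 (ρ.grading.sup_eq_top ▸ mem_top)

variable (ρ) in
theorem parityOp_parityOp (v : V) : ρ.parityOp (ρ.parityOp v) = v := by
  obtain ⟨x, hx, y, hy, rfl⟩ := ρ.exists_even_add_odd_eq v
  simp [parityOp_of_mem_even hx, parityOp_of_mem_odd hy]

theorem parityOp_comm {T : Module.End ℂ V} (heven : ∀ v ∈ ρ.even, T v ∈ ρ.even)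
    (hodd : ∀ v ∈ ρ.odd, T v ∈ ρ.odd) (v : V) : ρ.parityOp (T v) = T (ρ.parityOp v) := by
  obtain ⟨x, hx, y, hy, rfl⟩ := ρ.exists_even_add_odd_eq v
  simp [parityOp_of_mem_even hx, parityOp_of_mem_odd hy, parityOp_of_mem_even (heven x hx),
    parityOp_of_mem_odd (hodd y hy)]

theorem parityOp_anticomm {T : Module.End ℂ V} (heven : ∀ v ∈ ρ.even, T v ∈ ρ.odd)
    (hodd : ∀ v ∈ ρ.odd, T v ∈ ρ.even) (v : V) : ρ.parityOp (T v) = -T (ρ.parityOp v) := by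
  obtain ⟨x, hx, y, hy, rfl⟩ := ρ.exists_even_add_odd_eq v
  simp [parityOp_of_mem_even hx, parityOp_of_mem_odd hy, parityOp_of_mem_odd (heven x hx),
    parityOp_of_mem_even (hodd y hy), add_comm]

theorem eq_inf_even_sup_inf_odd {W : Submodule ℂ V} (hW : ∀ v ∈ W, ρ.parityOp v ∈ W) :
    W = (W ⊓ ρ.even) ⊔ (W ⊓ ρ.odd) := by
  refine le_antisymm (fun v hv ↦ ?_) (sup_le inf_le_left inf_le_left)
  obtain ⟨x, hx, y, hy, rfl⟩ := ρ.exists_even_add_odd_eq v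
  have hsub : x - y ∈ W := by
    simpa [parityOp_of_mem_even hx, parityOp_of_mem_odd hy, sub_eq_add_neg] using hW _ hv
  have hxW : x ∈ W := by
    have : x = (1 / 2 : ℂ) • ((x + y) + (x - y)) := by module
    exact this ▸ smul_mem _ _ (add_mem hv hsub)
  exact add_mem_sup ⟨hxW, hx⟩ ⟨(Submodule.add_mem_iff_right _ hxW).1 hv, hy⟩

variable (ρ) in
theorem exists_parity_le_eigenspace (τ : ZMod 2) :
    ∃ δ, ρ.parity τ ≤ ρ.parityOp.eigenspace δ := by
  rcases eq_or_ne τ 0 with rfl | hτ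
  · exact ⟨1, fun v hv ↦ by simpa using parityOp_of_mem_even hv⟩
  · refine ⟨-1, fun v hv ↦ ?_⟩
    rw [parity, if_neg hτ] at hv
    simpa using parityOp_of_mem_odd hv

end ParityOp

section ToSuperWitt

/-- The identification of the centreless `N = 2` Ramond algebra with the Lie superalgebra of vector
fields on the `(1|1)`-dimensional torus. -/
noncomputable def toSuperWitt (hc : ρ.c₀ = 0) : SuperWittRep ℂ V where
  D m := ρ.L m - ((m : ℂ) / 2) • ρ.H m
  I := ρ.H
  P m := (-1 / 2 : ℂ) • ρ.Gp m
  Q := ρ.Gm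
  σ := ρ.parityOp
  D_D m n v := by
    have hLL := ρ.rel_LL m n v
    have hLH := ρ.rel_LH m n v
    have hLH' := ρ.rel_LH n m v
    have hHH := ρ.rel_HH m n v
    rw [hc, mul_zero, zero_smul] at hLL hHH
    rw [add_comm n m] at hLH'
    simp only [LinearMap.sub_apply, LinearMap.smul_apply, map_sub, map_smul]
    push_cast
    linear_combination (norm := module) hLL - ((n : ℂ) / 2) • hLH + ((m : ℂ) / 2) • hLH'
      + ((m : ℂ) / 2 * (n / 2)) • hHH
  D_I m n v := by
    have hHH := ρ.rel_HH m n v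
    rw [hc, mul_zero, zero_smul] at hHH
    simp only [LinearMap.sub_apply, LinearMap.smul_apply, map_sub, map_smul]
    linear_combination (norm := module) ρ.rel_LH m n v - ((m : ℂ) / 2) • hHH
  I_I m n v := by simpa [hc, sub_eq_zero] using ρ.rel_HH m n v
  D_Q m n v := by
    have hLG := ρ.rel_LGm m n v
    rw [add_comm n m] at hLG
    simp only [LinearMap.sub_apply, LinearMap.smul_apply, map_sub, map_smul]
    linear_combination (norm := module) hLG - ((m : ℂ) / 2) • ρ.rel_HGm m n v
  D_P m n v := by
    have hLG := ρ.rel_LGp m n v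
    rw [add_comm n m] at hLG
    simp only [LinearMap.sub_apply, LinearMap.smul_apply, map_sub, map_smul]
    linear_combination (norm := module) (-1 / 2 : ℂ) • hLG + ((m : ℂ) / 4) • ρ.rel_HGp m n v
  I_Q m n v := by linear_combination (norm := module) ρ.rel_HGm m n v
  I_P m n v := by
    simp only [LinearMap.smul_apply, map_smul]
    linear_combination (norm := module) (-1 / 2 : ℂ) • ρ.rel_HGp m n v
  Q_P m n v := by
    have hGG := ρ.rel_GpGm n m v
    rw [hc, mul_zero, zero_smul, add_comm n m] at hGG
    simp only [LinearMap.sub_apply, LinearMap.smul_apply, map_smul]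
    push_cast
    linear_combination (norm := module) (-1 / 2 : ℂ) • hGG
  Q_Q m n v := eq_neg_of_add_eq_zero_left (ρ.rel_GmGm m n v)
  P_P m n v := by
    simp only [LinearMap.smul_apply, map_smul]
    linear_combination (norm := module) (1 / 4 : ℂ) • ρ.rel_GpGp m n v
  σ_σ := ρ.parityOp_parityOp
  σ_D m := parityOp_comm
    (fun v hv ↦ sub_mem (ρ.L_even m v hv) (smul_mem _ _ (ρ.H_even m v hv)))
    fun v hv ↦ sub_mem (ρ.L_odd m v hv) (smul_mem _ _ (ρ.H_odd m v hv))
  σ_I m := parityOp_comm (ρ.H_even m) (ρ.H_odd m)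
  σ_P m := parityOp_anticomm (fun v hv ↦ smul_mem _ _ (ρ.Gp_even m v hv))
    fun v hv ↦ smul_mem _ _ (ρ.Gp_odd m v hv)
  σ_Q m := parityOp_anticomm (ρ.Gm_even m) (ρ.Gm_odd m)

variable {ρ} {hc : ρ.c₀ = 0} {n : ℤ} {v : V}

theorem toSuperWitt_wt (μ : ℂ) : (ρ.toSuperWitt hc).wt μ = ρ.wt μ := by
  simp [SuperWittRep.wt, toSuperWitt, wt]

theorem mem_killed_toSuperWitt : v ∈ (ρ.toSuperWitt hc).killed n ↔
    ρ.L n v = 0 ∧ ρ.H n v = 0 ∧ ρ.Gp n v = 0 ∧ ρ.Gm n v = 0 := by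
  simp only [SuperWittRep.mem_killed_iff, toSuperWitt, LinearMap.sub_apply, LinearMap.smul_apply]
  refine ⟨fun ⟨hD, hI, hP, hQ⟩ ↦ ⟨?_, hI, ?_, hQ⟩, fun ⟨hL, hH, hGp, hGm⟩ ↦ ?_⟩
  · simpa [hI] using hD
  · simpa using hP
  · simp [hL, hH, hGp, hGm]

theorem isSubmod_iff_op_mem {W : Submodule ℂ V} :
    ρ.IsSubmod W ↔ ∀ i n, ∀ v ∈ W, (ρ.toSuperWitt hc).op i n v ∈ W := by
  refine ⟨fun ⟨hL, hH, hGp, hGm⟩ i n v hv ↦ ?_,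
    fun h ↦ ⟨fun n v hv ↦ ?_, h 1, fun n v hv ↦ ?_, h 3⟩⟩
  · match i with
    | 0 => exact sub_mem (hL n v hv) (smul_mem _ _ (hH n v hv))
    | 1 => exact hH n v hv
    | 2 => exact smul_mem _ _ (hGp n v hv)
    | 3 => exact hGm n v hv
  · exact (sub_mem_iff_left _ (smul_mem _ _ (h 1 n v hv))).1 (h 0 n v hv)
  · exact (smul_mem_iff _ (by norm_num)).1 (h 2 n v hv)

theorem IsSimple.toSuperWitt (hρ : ρ.IsSimple) : (ρ.toSuperWitt hc).IsSimple where
  nontrivial := by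
    by_contra! h
    exact hρ.1 fun n v ↦ mem_killed_toSuperWitt.1 (SuperWittRep.mem_killed.2 fun i ↦ h i n v)
  eq_bot_or_eq_top hW := hρ.2 _ ⟨isSubmod_iff_op_mem.2 fun i n _ ↦ hW.op_mem i n,
    eq_inf_even_sup_inf_odd fun _ ↦ hW.σ_mem⟩

theorem IsSimple.generatedBy (hρ : ρ.IsSimple) (hc : ρ.c₀ = 0) (hv0 : v ≠ 0) {ε : ℂ}
    (hv : ρ.parityOp v = ε • v) : ρ.GeneratedBy v := fun _ hW hvW ↦
  (hρ.toSuperWitt (hc := hc)).eq_top_of_op_mem (isSubmod_iff_op_mem.1 hW) hvW hv0 hv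

theorem IsSimple.exists_wt_ne_bot (hρ : ρ.IsSimple) (hweight : ρ.IsWeight) :
    ∃ μ, ρ.wt μ ≠ ⊥ := by
  by_contra! h
  have htop : (⊥ : Submodule ℂ V) = ⊤ := by simpa [IsWeight, h] using hweight
  refine hρ.1 fun n v ↦ ?_
  have hv : v = 0 := (Submodule.mem_bot ℂ).1 (htop ▸ mem_top)
  simp [hv]

variable {μ : ℂ} [FiniteDimensional ℂ ((ρ.toSuperWitt hc).wt μ)]

theorem IsSimple.isHighestWeight (hρ : ρ.IsSimple)
    (hμ : (ρ.toSuperWitt hc).extremal (Set.Ioi 0) μ ≠ ⊥) : ρ.IsHighestWeight := by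
  obtain ⟨w, hw, hw0, hP, h, ε, hH, hσ⟩ := SuperWittRep.exists_extremal_eigenvector_P hμ
  obtain ⟨hwt, hkilled⟩ := SuperWittRep.mem_extremal.1 hw
  rw [toSuperWitt_wt] at hwt
  exact ⟨w, hw0, hρ.generatedBy hc hw0 hσ, ⟨μ, h, Module.End.mem_eigenspace_iff.1 hwt, hH⟩,
    fun m hm ↦ mem_killed_toSuperWitt.1 (hkilled m hm), by simpa [RamondRep.toSuperWitt] using hP⟩

theorem IsSimple.isLowestWeight (hρ : ρ.IsSimple)
    (hμ : (ρ.toSuperWitt hc).extremal (Set.Iio 0) μ ≠ ⊥) : ρ.IsLowestWeight := by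
  obtain ⟨w, hw, hw0, hQ, h, ε, hH, hσ⟩ := SuperWittRep.exists_extremal_eigenvector_Q hμ
  obtain ⟨hwt, hkilled⟩ := SuperWittRep.mem_extremal.1 hw
  rw [toSuperWitt_wt] at hwt
  exact ⟨w, hw0, hρ.generatedBy hc hw0 hσ, ⟨μ, h, Module.End.mem_eigenspace_iff.1 hwt, hH⟩,
    fun m hm ↦ mem_killed_toSuperWitt.1 (hkilled m hm), hQ⟩

end ToSuperWitt

end RamondRep

/-- a simple weight module with finite-dimensional weight spaces over
the `N = 2` Ramond algebra is a highest weight module, a lowest weight module, or a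
cuspidal module with `dim (V_μ ∩ V_τ) ≤ 2` for every weight `μ` and parity `τ`. -/
theorem stmt0 {V : Type} [AddCommGroup V] [Module ℂ V] (ρ : RamondRep V)
    (hweight : ρ.IsWeight) (hfin : ∀ μ : ℂ, FiniteDimensional ℂ ↥(ρ.wt μ))
    (hsimple : ρ.IsSimple) :
    ρ.IsHighestWeight ∨ ρ.IsLowestWeight ∨
      (ρ.Cuspidal ∧ ∀ (μ : ℂ) (τ : ZMod 2),
        Module.rank ℂ ↥(ρ.wt μ ⊓ ρ.parity τ) ≤ 2) := by
  obtain ⟨l, hl⟩ := hsimple.exists_wt_ne_bot hweight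
  obtain ⟨v, -, hv⟩ := (Submodule.ne_bot_iff _).1 hl
  have hc : ρ.c₀ = 0 := ρ.c₀_eq_zero hv
  have hfin' (μ : ℂ) : FiniteDimensional ℂ ((ρ.toSuperWitt hc).wt μ) := by
    rw [RamondRep.toSuperWitt_wt]
    exact hfin μ
  rw [← RamondRep.toSuperWitt_wt (hc := hc)] at hl
  rcases hsimple.toSuperWitt.extremal_ne_bot_or_rank_le_two hl with
    ⟨ν, hν⟩ | ⟨ν, hν⟩ | hrank
  · exact .inl (hsimple.isHighestWeight hν)
  · exact .inr (.inl (hsimple.isLowestWeight hν))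
  · have hrank' (μ : ℂ) (τ : ZMod 2) : Module.rank ℂ ↥(ρ.wt μ ⊓ ρ.parity τ) ≤ 2 := by
      obtain ⟨δ, hδ⟩ := ρ.exists_parity_le_eigenspace τ
      have hle := inf_le_inf (RamondRep.toSuperWitt_wt (hc := hc) μ).ge hδ
      exact (Submodule.rank_mono hle).trans (hrank μ δ)
    exact .inr (.inr ⟨⟨hweight, 2, hrank'⟩, hrank'⟩)
end

section
/- Let V be a simple weight module with finite-dimensional weight spaces over the N=2 Ramond algebra 𝔤 which is neither a highest weight module nor a lowest weight module. Then for every nonzero integer n and every λ ∈ ℂ, the linear map from V_λ to V_{λ+n} ⊕ V_{λ+n} ⊕ V_{λ+n} ⊕ V_{λ+n} ⊕ V_{λ+n+1} given by v ↦ (L_n v, H_n v, G_n^+ v, G_n^- v, L_{n+1} v) is injective. -/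
open Submodule

/-!
Suppose that a nonzero `v` of weight `μ` is killed by `H_n`, `G_n^±` and `L_m` with `n > 0` and
`m` coprime to `n`. Brackets with `H_n` show that `G_{kn}^±` kills `v` for `k ≥ 1`, so
`[G_{(k-1)n}^+, G_n^-]` and `[G_n^+, G_{(k-1)n}^-]` show that `L_{kn}` does for `k ≥ 2`. The `j`
with `L_j v = 0` are closed under nonzero sums of distinct elements, so by Bézout they contain all
large integers, and brackets with `H_n` and `G_n^±` extend this to `H_j` and `G_j^±`.

The vectors killed by all sufficiently large modes form a graded submodule, which is everything by
simplicity. As `V_μ` is finite dimensional, some `N'` works for all of `V_μ`: its vectors are killed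
by all modes `≥ N'`. If `w` in `V_{μ+k}`, with `k` large, is killed by all modes `≥ N`, then
`L_{k±1}` kills both `w` and `L_{-k} w`, so `L_{±1} w = 0`, hence `L_0 w = 0` and `w = 0`. So the
weights in `μ + ℤ` of vectors killed by all modes `≥ N` are bounded above, and a vector of maximal
weight is killed by all positive modes. An `H_0`-eigenvector of this kind, or its image under
`G_0^+`, makes `V` a highest weight module.

For `n < 0`, twisting by an automorphism that reverses modes exchanges highest and lowest weight.
-/

open Filter Module.End

/-- By Bézout every `j` is `k * n + i * m` with `0 ≤ i < n`; adding `m` repeatedly to `k * n` stays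
in `S` when `k` is large, since the partial sums are then larger than `|m|`. -/
theorem eventually_mem_of_isCoprime {S : Set ℤ} {n m : ℤ} (hn : 0 < n) (hnm : IsCoprime n m)
    (hS : ∀ p ∈ S, ∀ q ∈ S, p ≠ q → p + q ≠ 0 → p + q ∈ S) (hm : m ∈ S)
    (hmul : ∀ᶠ k in atTop, k * n ∈ S) : ∀ᶠ j in atTop, j ∈ S := by
  have residue (i : ℕ) : ∀ᶠ k in atTop, k * n + i * m ∈ S := by
    induction i with
    | zero => simpa using hmul
    | succ i ih =>
      have large : Tendsto (fun k : ℤ => k * n + i * m) atTop atTop :=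
        tendsto_atTop_add_const_right _ _ (tendsto_id.atTop_mul_const' hn)
      filter_upwards [ih, large.eventually_gt_atTop |m|] with k hk hlarge
      have := le_abs_self m
      have := neg_abs_le m
      convert hS _ hk m hm (by omega) (by omega) using 1
      push_cast
      ring
  obtain ⟨K, hK⟩ := eventually_atTop.1
    ((eventually_all_finset (Finset.range n.toNat)).2 fun i _ => residue i)
  obtain ⟨a, b, hab⟩ := hnm
  filter_upwards [eventually_ge_atTop (K * n + n * |m|)] with j hj
  set i := j * b % n
  have hi₀ : 0 ≤ i := Int.emod_nonneg _ hn.ne'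
  have hi : i < n := Int.emod_lt_of_pos _ hn
  have hj_eq : (j * a + j * b / n * m) * n + i * m = j := by
    linear_combination j * hab + m * Int.mul_ediv_add_emod (j * b) n
  have hk : K ≤ j * a + j * b / n * m := by
    have : i * m ≤ n * |m| := by nlinarith [le_abs_self m, abs_nonneg m]
    exact le_of_mul_le_mul_right (by linarith) hn
  have := hK _ hk i.toNat (Finset.mem_range.2 (by omega))
  rwa [Int.toNat_of_nonneg hi₀, hj_eq] at this

theorem exists_eigenvector_mem_of_forall_apply_mem {K W : Type*} [Field K] [IsAlgClosed K]
    [AddCommGroup W] [Module K W] {f : Module.End K W} {p : Submodule K W} [FiniteDimensional K p]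
    (hp : p ≠ ⊥) (hf : ∀ w ∈ p, f w ∈ p) : ∃ a : K, ∃ w ∈ p, w ≠ 0 ∧ f w = a • w := by
  have := nontrivial_iff_ne_bot.2 hp
  obtain ⟨a, ha⟩ := exists_eigenvalue (f.restrict hf)
  obtain ⟨w, hw⟩ := ha.exists_hasEigenvector
  exact ⟨a, w, w.2, by simpa using hw.2, congrArg Subtype.val hw.apply_eq_smul⟩

namespace RamondRep

/-- The four families of non-central generators of the `N = 2` Ramond algebra. It serves to state
facts about all of them at once. -/
inductive Generator
  | L
  | H
  | Gp
  | Gm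

variable {V : Type} [AddCommGroup V] [Module ℂ V] (ρ : RamondRep V)

/-- The operator by which the mode `m` generator of a given family acts. -/
def op : Generator → ℤ → V →ₗ[ℂ] V
  | .L => ρ.L
  | .H => ρ.H
  | .Gp => ρ.Gp
  | .Gm => ρ.Gm

theorem forall_op {P : (ℤ → V →ₗ[ℂ] V) → Prop} :
    (∀ g, P (ρ.op g)) ↔ P ρ.L ∧ P ρ.H ∧ P ρ.Gp ∧ P ρ.Gm :=
  ⟨fun h => ⟨h .L, h .H, h .Gp, h .Gm⟩, by rintro ⟨hL, hH, hGp, hGm⟩ (_ | _) <;> assumption⟩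

theorem isSubmod_iff {W : Submodule ℂ V} :
    ρ.IsSubmod W ↔ ∀ g m, ∀ v ∈ W, ρ.op g m v ∈ W :=
  (ρ.forall_op (P := fun X => ∀ m, ∀ v ∈ W, X m v ∈ W)).symm

theorem op_apply_op_eq_zero {m n : ℤ} {v : V} (hmn : m + n ≠ 0) {g : Generator}
    (hv : ρ.op g m v = 0) (hbracket : ∀ g', ρ.op g' (m + n) v = 0) (g' : Generator) :
    ρ.op g m (ρ.op g' n v) = 0 := by
  have hnm : n + m ≠ 0 := by rwa [add_comm]
  have hL : ρ.L (m + n) v = 0 := hbracket .L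
  have hH : ρ.H (m + n) v = 0 := hbracket .H
  have hGp : ρ.Gp (m + n) v = 0 := hbracket .Gp
  have hGm : ρ.Gm (m + n) v = 0 := hbracket .Gm
  have hL' := add_comm m n ▸ hL
  have hH' := add_comm m n ▸ hH
  have hGp' := add_comm m n ▸ hGp
  have hGm' := add_comm m n ▸ hGm
  cases g <;> cases g' <;> simp only [op] at hv ⊢
  · simpa [hv, hL, hmn] using ρ.rel_LL m n v
  · simpa [hv, hH] using ρ.rel_LH m n v
  · simpa [hv, hGp'] using ρ.rel_LGp m n v
  · simpa [hv, hGm'] using ρ.rel_LGm m n v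
  · simpa [hv, hH'] using ρ.rel_LH n m v
  · simpa [hv, hmn] using ρ.rel_HH m n v
  · simpa [hv, hGp] using ρ.rel_HGp m n v
  · simpa [hv, hGm] using ρ.rel_HGm m n v
  · simpa [hv, hGp] using ρ.rel_LGp n m v
  · simpa [hv, hGp'] using ρ.rel_HGp n m v
  · simpa [hv] using ρ.rel_GpGp m n v
  · simpa [hv, hL, hH, hmn] using ρ.rel_GpGm m n v
  · simpa [hv, hGm] using ρ.rel_LGm n m v
  · simpa [hv, hGm'] using ρ.rel_HGm n m v
  · simpa [hv, hL', hH', hnm] using ρ.rel_GpGm n m v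
  · simpa [hv] using ρ.rel_GmGm m n v

theorem mem_wt {μ : ℂ} {v : V} : v ∈ ρ.wt μ ↔ ρ.L 0 v = μ • v :=
  mem_eigenspace_iff

theorem op_mem_wt {μ : ℂ} {v : V} (hv : v ∈ ρ.wt μ) (g : Generator) (n : ℤ) :
    ρ.op g n v ∈ ρ.wt (μ + n) := by
  rw [mem_wt] at hv ⊢
  suffices ρ.L 0 (ρ.op g n v) - ρ.op g n (ρ.L 0 v) = (n : ℂ) • ρ.op g n v by
    rw [sub_eq_iff_eq_add.1 this, hv, map_smul, add_smul, add_comm]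
  cases g <;> simp only [op]
  · by_cases hn : n = 0
    · simp [hn]
    · simpa [hn] using ρ.rel_LL 0 n v
  · simpa using ρ.rel_LH 0 n v
  · simpa using ρ.rel_LGp 0 n v
  · simpa using ρ.rel_LGm 0 n v

/-! ### Parity -/

/-- The projection onto the even part along the odd part. A subspace is graded exactly when it is
stable under this projection. -/
noncomputable def evenProj : V →ₗ[ℂ] V :=
  ρ.even.projection ρ.odd ρ.grading

theorem evenProj_mem (v : V) : ρ.evenProj v ∈ ρ.even :=
  projection_apply_mem ρ.grading v

theorem sub_evenProj_mem (v : V) : v - ρ.evenProj v ∈ ρ.odd := by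
  rw [evenProj, ← projection_eq_self_sub_projection]
  exact projection_apply_mem ρ.grading.symm v

theorem evenProj_of_mem_even {v : V} (hv : v ∈ ρ.even) : ρ.evenProj v = v :=
  (projection_eq_self_iff ρ.grading v).2 hv

theorem evenProj_of_mem_odd {v : V} (hv : v ∈ ρ.odd) : ρ.evenProj v = 0 :=
  (projection_apply_eq_zero_iff ρ.grading).2 hv

theorem evenProj_apply_of_preserves {f : V →ₗ[ℂ] V} (he : ∀ v ∈ ρ.even, f v ∈ ρ.even)
    (ho : ∀ v ∈ ρ.odd, f v ∈ ρ.odd) (v : V) : ρ.evenProj (f v) = f (ρ.evenProj v) := by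
  have heven := ρ.evenProj_of_mem_even (he _ (ρ.evenProj_mem v))
  have hodd := ρ.evenProj_of_mem_odd (ho _ (ρ.sub_evenProj_mem v))
  rw [map_sub, map_sub, heven] at hodd
  exact sub_eq_zero.1 hodd

theorem evenProj_apply_of_reverses {f : V →ₗ[ℂ] V} (he : ∀ v ∈ ρ.even, f v ∈ ρ.odd)
    (ho : ∀ v ∈ ρ.odd, f v ∈ ρ.even) (v : V) : ρ.evenProj (f v) = f v - f (ρ.evenProj v) := by
  have hodd := ρ.evenProj_of_mem_odd (he _ (ρ.evenProj_mem v))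
  have heven := ρ.evenProj_of_mem_even (ho _ (ρ.sub_evenProj_mem v))
  rwa [map_sub, map_sub, hodd, sub_zero] at heven

theorem evenProj_L (m : ℤ) (v : V) : ρ.evenProj (ρ.L m v) = ρ.L m (ρ.evenProj v) :=
  ρ.evenProj_apply_of_preserves (ρ.L_even m) (ρ.L_odd m) v

theorem evenProj_H (m : ℤ) (v : V) : ρ.evenProj (ρ.H m v) = ρ.H m (ρ.evenProj v) :=
  ρ.evenProj_apply_of_preserves (ρ.H_even m) (ρ.H_odd m) v

theorem evenProj_op (g : Generator) (m : ℤ) (v : V) :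
    ρ.evenProj (ρ.op g m v) = ρ.op g m (ρ.evenProj v) ∨
      ρ.evenProj (ρ.op g m v) = ρ.op g m v - ρ.op g m (ρ.evenProj v) :=
  match g with
  | .L => .inl (ρ.evenProj_L m v)
  | .H => .inl (ρ.evenProj_H m v)
  | .Gp => .inr (ρ.evenProj_apply_of_reverses (ρ.Gp_even m) (ρ.Gp_odd m) v)
  | .Gm => .inr (ρ.evenProj_apply_of_reverses (ρ.Gm_even m) (ρ.Gm_odd m) v)

theorem op_evenProj_eq_zero {g : Generator} {m : ℤ} {v : V} (hv : ρ.op g m v = 0) :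
    ρ.op g m (ρ.evenProj v) = 0 := by
  simpa [hv, eq_comm] using ρ.evenProj_op g m v

theorem isGradedSubmod_of_evenProj_mem {W : Submodule ℂ V} (hW : ρ.IsSubmod W)
    (hproj : ∀ v ∈ W, ρ.evenProj v ∈ W) : ρ.IsGradedSubmod W := by
  refine ⟨hW, le_antisymm (fun v hv => ?_) (sup_le inf_le_left inf_le_left)⟩
  exact mem_sup.2 ⟨ρ.evenProj v, ⟨hproj v hv, ρ.evenProj_mem v⟩, v - ρ.evenProj v,
    ⟨sub_mem hv (hproj v hv), ρ.sub_evenProj_mem v⟩, add_sub_cancel _ _⟩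

theorem IsSimple.generatedBy_s2 {ρ : RamondRep V} (hρ : ρ.IsSimple) {v : V} (hv : v ≠ 0)
    (hhom : v ∈ ρ.even ∨ v ∈ ρ.odd) : ρ.GeneratedBy v := by
  intro W hW hvW
  rw [isSubmod_iff] at hW
  let W' := W ⊓ W.comap ρ.evenProj
  have hsub : ρ.IsSubmod W' := by
    refine ρ.isSubmod_iff.2 fun g m w hw => ⟨hW g m w hw.1, ?_⟩
    have hproj : ρ.op g m (ρ.evenProj w) ∈ W := hW g m _ hw.2
    rcases ρ.evenProj_op g m w with h | h <;> rw [SetLike.mem_coe, Submodule.mem_comap, h]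
    · exact hproj
    · exact sub_mem (hW g m w hw.1) hproj
  have hgraded : ρ.IsGradedSubmod W' :=
    ρ.isGradedSubmod_of_evenProj_mem hsub fun w hw =>
      ⟨hw.2, by simpa [ρ.evenProj_of_mem_even (ρ.evenProj_mem w)] using hw.2⟩
  have hvW' : v ∈ W' := by
    refine ⟨hvW, ?_⟩
    rcases hhom with h | h
    · simpa [ρ.evenProj_of_mem_even h] using hvW
    · simp [ρ.evenProj_of_mem_odd h]
  rcases hρ.2 W' hgraded with h | h
  · exact absurd ((mem_bot ℂ).1 (h ▸ hvW')) hv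
  · exact top_le_iff.1 (h ▸ inf_le_left)

/-! ### Vectors annihilated by all large modes -/

/-- The vectors annihilated by all operators of mode at least `N`. A module is highest weight as
soon as one of these subspaces contains a suitable nonzero vector. -/
def annihilatedFrom (N : ℤ) : Submodule ℂ V :=
  ⨅ (g : Generator) (m : ℤ) (_ : N ≤ m), LinearMap.ker (ρ.op g m)

variable {ρ}

theorem mem_annihilatedFrom {N : ℤ} {v : V} :
    v ∈ ρ.annihilatedFrom N ↔ ∀ g m, N ≤ m → ρ.op g m v = 0 := by
  simp [annihilatedFrom]

variable (ρ) in
theorem annihilatedFrom_mono : Monotone ρ.annihilatedFrom := fun _ _ h _ hv =>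
  mem_annihilatedFrom.2 fun g m hm => mem_annihilatedFrom.1 hv g m (h.trans hm)

theorem evenProj_mem_annihilatedFrom {N : ℤ} {v : V} (hv : v ∈ ρ.annihilatedFrom N) :
    ρ.evenProj v ∈ ρ.annihilatedFrom N :=
  mem_annihilatedFrom.2 fun g m hm => ρ.op_evenProj_eq_zero (mem_annihilatedFrom.1 hv g m hm)

theorem op_mem_annihilatedFrom {N N' n : ℤ} {v : V} (hv : v ∈ ρ.annihilatedFrom N)
    (hN : N ≤ N') (hn : N ≤ N' + n) (hn₀ : 0 < N' + n) (g : Generator) :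
    ρ.op g n v ∈ ρ.annihilatedFrom N' := by
  rw [mem_annihilatedFrom] at hv ⊢
  exact fun g' m hm => ρ.op_apply_op_eq_zero (by omega) (hv g' m (by omega))
    (fun g'' => hv g'' (m + n) (by omega)) g

theorem IsSimple.iSup_annihilatedFrom_eq_top (hρ : ρ.IsSimple) {N : ℤ}
    (hN : ρ.annihilatedFrom N ≠ ⊥) : ⨆ N, ρ.annihilatedFrom N = ⊤ := by
  have mem_iSup {v : V} :
      v ∈ ⨆ N, ρ.annihilatedFrom N ↔ ∃ N, v ∈ ρ.annihilatedFrom N :=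
    mem_iSup_of_directed _ ρ.annihilatedFrom_mono.directed_le
  have hsub : ρ.IsSubmod (⨆ N, ρ.annihilatedFrom N) := by
    refine ρ.isSubmod_iff.2 fun g n v hv => ?_
    obtain ⟨M, hM⟩ := mem_iSup.1 hv
    exact mem_iSup.2 ⟨max M (max (M - n) (1 - n)),
      op_mem_annihilatedFrom hM (by omega) (by omega) (by omega) g⟩
  refine (hρ.2 _ (ρ.isGradedSubmod_of_evenProj_mem hsub fun v hv => ?_)).resolve_left fun h => ?_
  · obtain ⟨M, hM⟩ := mem_iSup.1 hv
    exact mem_iSup.2 ⟨M, evenProj_mem_annihilatedFrom hM⟩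
  · exact hN (eq_bot_mono (le_iSup _ N) h)

theorem exists_le_annihilatedFrom {W : Submodule ℂ V} (hW : W.FG)
    (htop : ⨆ N, ρ.annihilatedFrom N = ⊤) : ∃ N, W ≤ ρ.annihilatedFrom N := by
  obtain ⟨s, hs⟩ := CompleteLattice.IsCompactElement.exists_finset_of_le_iSup _
    ((fg_iff_compact W).1 hW) _ (htop ▸ le_top)
  obtain ⟨N, hN⟩ := s.exists_le
  exact ⟨N, hs.trans (iSup₂_le fun M hM => ρ.annihilatedFrom_mono (hN M hM))⟩

/-! ### Extremal weights -/

theorem L_add_eq_zero {p q : ℤ} {v : V} (hne : p ≠ q) (hsum : p + q ≠ 0) (hp : ρ.L p v = 0)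
    (hpq : ρ.L p (ρ.L q v) = 0) : ρ.L (p + q) v = 0 := by
  have hbracket := ρ.rel_LL p q v
  simp only [hp, hpq, hsum, map_zero, sub_zero, if_false, mul_zero, zero_mul, zero_smul,
    add_zero] at hbracket
  exact (smul_eq_zero.1 hbracket.symm).resolve_left (sub_ne_zero.2 (mod_cast hne.symm))

theorem L_zero_eq_zero {v : V} (h₁ : ρ.L 1 v = 0) (h₂ : ρ.L (-1) v = 0) : ρ.L 0 v = 0 := by
  have hbracket := ρ.rel_LL 1 (-1) v
  norm_num [h₁, h₂] at hbracket
  exact hbracket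

theorem eq_zero_of_mem_wt_add {μ : ℂ} {N N' k : ℤ} {w : V} (hμ : ρ.wt μ ≤ ρ.annihilatedFrom N')
    (hk : 0 < k) (hN : N < k) (hN' : N' < k) (hμk : μ + k ≠ 0) (hw : w ∈ ρ.wt (μ + k))
    (hwN : w ∈ ρ.annihilatedFrom N) : w = 0 := by
  have hLw : ρ.L (-k) w ∈ ρ.annihilatedFrom N' :=
    hμ (by simpa [op] using ρ.op_mem_wt hw .L (-k))
  have hL {i : ℤ} (hi₀ : i ≠ 0) (hi : -1 ≤ i) : ρ.L i w = 0 := by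
    have := L_add_eq_zero (p := k + i) (q := -k) (by omega) (by omega)
      (mem_annihilatedFrom.1 hwN .L _ (by omega)) (mem_annihilatedFrom.1 hLw .L _ (by omega))
    rwa [add_neg_cancel_comm] at this
  have hL₀ := L_zero_eq_zero (hL one_ne_zero (by norm_num)) (hL (by norm_num) le_rfl)
  rw [mem_wt, hL₀] at hw
  exact (smul_eq_zero.1 hw.symm).resolve_left hμk

theorem exists_forall_wt_inf_annihilatedFrom_eq_bot {μ : ℂ} {N N' : ℤ}
    (hμ : ρ.wt μ ≤ ρ.annihilatedFrom N') (hne : ρ.wt μ ⊓ ρ.annihilatedFrom N ≠ ⊥) :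
    ∃ ν : ℂ, ρ.wt ν ⊓ ρ.annihilatedFrom N ≠ ⊥ ∧
      ∀ j : ℤ, 0 < j → ρ.wt (ν + j) ⊓ ρ.annihilatedFrom N = ⊥ := by
  have hbdd : ∃ B : ℤ, ∀ k : ℤ, ρ.wt (μ + k) ⊓ ρ.annihilatedFrom N ≠ ⊥ → k ≤ B := by
    refine ⟨max (max N N') (max 0 ⌈-μ.re⌉), fun k hk => ?_⟩
    by_contra! hlt
    simp only [max_lt_iff] at hlt
    have hμk : μ + k ≠ 0 := fun h => by
      have hre : μ.re + k = 0 := by simpa using congrArg Complex.re h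
      linarith [Int.ceil_lt_iff.1 hlt.2.2]
    exact hk ((Submodule.eq_bot_iff _).2 fun w hw =>
      eq_zero_of_mem_wt_add hμ hlt.2.1 hlt.1.1 hlt.1.2 hμk hw.1 hw.2)
  obtain ⟨k, hk, hmax⟩ := Int.exists_greatest_of_bdd hbdd ⟨0, by simpa using hne⟩
  refine ⟨μ + k, hk, fun j hj => ?_⟩
  by_contra h
  have := hmax (k + j) (by rwa [Int.cast_add, ← add_assoc])
  omega

theorem mem_annihilatedFrom_one {ν : ℂ} {N : ℤ} {v : V}
    (htop : ∀ j : ℤ, 0 < j → ρ.wt (ν + j) ⊓ ρ.annihilatedFrom N = ⊥) (hv : v ∈ ρ.wt ν)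
    (hvN : v ∈ ρ.annihilatedFrom N) : v ∈ ρ.annihilatedFrom 1 := by
  refine mem_annihilatedFrom.2 fun g j hj => ?_
  rcases le_or_gt N j with hNj | hjN
  · exact mem_annihilatedFrom.1 hvN g j hNj
  · exact (Submodule.eq_bot_iff _).1 (htop j hj) _
      ⟨ρ.op_mem_wt hv g j, op_mem_annihilatedFrom hvN le_rfl (by omega) (by omega) g⟩

theorem IsSimple.isHighestWeight_of_homogeneous (hρ : ρ.IsSimple) {v : V} {h h' : ℂ} (hv : v ≠ 0)
    (hhom : v ∈ ρ.even ∨ v ∈ ρ.odd) (hL : ρ.L 0 v = h • v) (hH : ρ.H 0 v = h' • v)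
    (hpos : v ∈ ρ.annihilatedFrom 1) (hGp : ρ.Gp 0 v = 0) : ρ.IsHighestWeight :=
  ⟨v, hv, hρ.generatedBy_s2 hv hhom, ⟨h, h', hL, hH⟩, fun m hm =>
    (ρ.forall_op (P := fun X => X m v = 0)).1 fun g => mem_annihilatedFrom.1 hpos g m hm, hGp⟩

theorem IsSimple.isHighestWeight_of_singular (hρ : ρ.IsSimple) {v : V} {h h' : ℂ} (hv : v ≠ 0)
    (hL : ρ.L 0 v = h • v) (hH : ρ.H 0 v = h' • v)
    (hpos : v ∈ ρ.annihilatedFrom 1) (hGp : ρ.Gp 0 v = 0) : ρ.IsHighestWeight := by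
  have hL_even : ρ.L 0 (ρ.evenProj v) = h • ρ.evenProj v := by rw [← evenProj_L, hL, map_smul]
  have hH_even : ρ.H 0 (ρ.evenProj v) = h' • ρ.evenProj v := by rw [← evenProj_H, hH, map_smul]
  have hpos_even := evenProj_mem_annihilatedFrom hpos
  have hGp_even : ρ.Gp 0 (ρ.evenProj v) = 0 := ρ.op_evenProj_eq_zero (g := .Gp) hGp
  by_cases heven : ρ.evenProj v = 0
  · have hodd : v ∈ ρ.odd := by simpa [heven] using ρ.sub_evenProj_mem v
    exact hρ.isHighestWeight_of_homogeneous hv (.inr hodd) hL hH hpos hGp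
  · exact hρ.isHighestWeight_of_homogeneous heven (.inl (ρ.evenProj_mem v))
      hL_even hH_even hpos_even hGp_even

theorem H_zero_Gp_zero {v : V} {h' : ℂ} (hH : ρ.H 0 v = h' • v) :
    ρ.H 0 (ρ.Gp 0 v) = (h' + 1) • ρ.Gp 0 v := by
  have hbracket := ρ.rel_HGp 0 0 v
  rw [hH, map_smul, sub_eq_iff_eq_add, add_zero] at hbracket
  rw [hbracket, add_smul, one_smul, add_comm]

theorem Gp_Gp_self (n : ℤ) (v : V) : ρ.Gp n (ρ.Gp n v) = 0 := by
  have h := ρ.rel_GpGp n n v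
  rw [← two_smul ℂ] at h
  exact (smul_eq_zero.1 h).resolve_left two_ne_zero

theorem IsSimple.isHighestWeight_of_wt_inf_annihilatedFrom_one_ne_bot (hρ : ρ.IsSimple) {ν : ℂ}
    [FiniteDimensional ℂ (ρ.wt ν)] (hν : ρ.wt ν ⊓ ρ.annihilatedFrom 1 ≠ ⊥) :
    ρ.IsHighestWeight := by
  have hstable (g : Generator) (w : V) (hw : w ∈ ρ.wt ν ⊓ ρ.annihilatedFrom 1) :
      ρ.op g 0 w ∈ ρ.wt ν ⊓ ρ.annihilatedFrom 1 :=
    ⟨by simpa using ρ.op_mem_wt hw.1 g 0,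
      op_mem_annihilatedFrom hw.2 le_rfl le_rfl one_pos g⟩
  have : FiniteDimensional ℂ ↥(ρ.wt ν ⊓ ρ.annihilatedFrom 1) :=
    finiteDimensional_of_le inf_le_left
  obtain ⟨h', u, hu, hu₀, hHu⟩ := exists_eigenvector_mem_of_forall_apply_mem hν (hstable .H)
  by_cases hGp : ρ.Gp 0 u = 0
  · exact hρ.isHighestWeight_of_singular hu₀ (ρ.mem_wt.1 hu.1) hHu hu.2 hGp
  · have hGu := hstable .Gp u hu
    exact hρ.isHighestWeight_of_singular hGp (ρ.mem_wt.1 hGu.1) (H_zero_Gp_zero hHu) hGu.2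
      (Gp_Gp_self 0 u)

theorem IsSimple.isHighestWeight_of_mem_annihilatedFrom (hρ : ρ.IsSimple)
    (hfin : ∀ μ, FiniteDimensional ℂ (ρ.wt μ)) {μ : ℂ} {N : ℤ} {v : V} (hv₀ : v ≠ 0)
    (hv : v ∈ ρ.wt μ) (hvN : v ∈ ρ.annihilatedFrom N) : ρ.IsHighestWeight := by
  have htop := hρ.iSup_annihilatedFrom_eq_top ((Submodule.ne_bot_iff _).2 ⟨v, hvN, hv₀⟩)
  obtain ⟨N', hN'⟩ := exists_le_annihilatedFrom (Module.Finite.iff_fg.1 (hfin μ)) htop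
  obtain ⟨ν, hν, hmax⟩ := exists_forall_wt_inf_annihilatedFrom_eq_bot hN'
    ((Submodule.ne_bot_iff _).2 ⟨v, ⟨hv, hvN⟩, hv₀⟩)
  obtain ⟨w, hw, hw₀⟩ := (Submodule.ne_bot_iff _).1 hν
  exact hρ.isHighestWeight_of_wt_inf_annihilatedFrom_one_ne_bot
    ((Submodule.ne_bot_iff _).2 ⟨w, ⟨hw.1, mem_annihilatedFrom_one hmax hw.1 hw.2⟩, hw₀⟩)

/-! ### Vectors annihilated by finitely many modes -/

theorem Gp_mul_eq_zero {n k : ℤ} {v : V} (hH : ρ.H n v = 0) (hGp : ρ.Gp n v = 0) (hk : 1 ≤ k) :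
    ρ.Gp (k * n) v = 0 := by
  induction k, hk using Int.leInduction with
  | base => simpa using hGp
  | succ k _ ih =>
    rw [add_one_mul, add_comm]
    simpa [hH, ih] using (ρ.rel_HGp n (k * n) v).symm

theorem Gm_mul_eq_zero {n k : ℤ} {v : V} (hH : ρ.H n v = 0) (hGm : ρ.Gm n v = 0) (hk : 1 ≤ k) :
    ρ.Gm (k * n) v = 0 := by
  induction k, hk using Int.leInduction with
  | base => simpa using hGm
  | succ k _ ih =>
    rw [add_one_mul, add_comm]
    simpa [hH, ih] using (ρ.rel_HGm n (k * n) v).symm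

theorem L_mul_eq_zero {n k : ℤ} {v : V} (hn : n ≠ 0) (hH : ρ.H n v = 0) (hGp : ρ.Gp n v = 0)
    (hGm : ρ.Gm n v = 0) (hk : 2 ≤ k) : ρ.L (k * n) v = 0 := by
  have hkn : k * n ≠ 0 := mul_ne_zero (by omega) hn
  have hGp' := Gp_mul_eq_zero (k := k - 1) hH hGp (by omega)
  have hGm' := Gm_mul_eq_zero (k := k - 1) hH hGm (by omega)
  have h₁ := ρ.rel_GpGm ((k - 1) * n) n v
  have h₂ := ρ.rel_GpGm n ((k - 1) * n) v
  rw [show (k - 1) * n + n = k * n by ring] at h₁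
  rw [show n + (k - 1) * n = k * n by ring] at h₂
  simp only [hGp, hGm, hGp', hGm', hkn, map_zero, add_zero, if_false, mul_zero, zero_mul,
    zero_smul] at h₁ h₂
  have hsum : (-4 : ℂ) • ρ.L (k * n) v = 0 := by
    linear_combination (norm := module) -h₁ - h₂
  exact (smul_eq_zero.1 hsum).resolve_left (by norm_num)

theorem eventually_L_eq_zero {n m : ℤ} {v : V} (hn : 0 < n) (hnm : IsCoprime n m)
    (hH : ρ.H n v = 0) (hGp : ρ.Gp n v = 0) (hGm : ρ.Gm n v = 0) (hL : ρ.L m v = 0) :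
    ∀ᶠ j in atTop, ρ.L j v = 0 :=
  eventually_mem_of_isCoprime (S := {j | ρ.L j v = 0}) hn hnm
    (fun p hp q hq hne hsum => L_add_eq_zero hne hsum hp (by rw [hq, map_zero])) hL
    (by filter_upwards [eventually_ge_atTop 2] with k hk using L_mul_eq_zero hn.ne' hH hGp hGm hk)

theorem exists_mem_annihilatedFrom {n : ℤ} {v : V} (hn : n ≠ 0)
    (hL : ∀ᶠ j in atTop, ρ.L j v = 0) (hH : ρ.H n v = 0) (hGp : ρ.Gp n v = 0)
    (hGm : ρ.Gm n v = 0) : ∃ N, v ∈ ρ.annihilatedFrom N := by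
  have hshift : Tendsto (· - n) atTop atTop := tendsto_atTop_add_const_right _ (-n) tendsto_id
  have hH' : ∀ᶠ j in atTop, ρ.H j v = 0 := by
    filter_upwards [hshift.eventually hL] with j hj
    simpa [hj, hH, hn] using (ρ.rel_LH (j - n) n v).symm
  have hGp' : ∀ᶠ j in atTop, ρ.Gp j v = 0 := by
    filter_upwards [hshift.eventually hH'] with j hj
    simpa [hj, hGp] using (ρ.rel_HGp (j - n) n v).symm
  have hGm' : ∀ᶠ j in atTop, ρ.Gm j v = 0 := by
    filter_upwards [hshift.eventually hH'] with j hj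
    simpa [hj, hGm] using (ρ.rel_HGm (j - n) n v).symm
  obtain ⟨N, hN⟩ := eventually_atTop.1 (hL.and (hH'.and (hGp'.and hGm')))
  exact ⟨N, mem_annihilatedFrom.2 fun g j hj =>
    (ρ.forall_op (P := fun X => X j v = 0)).2 (hN j hj) g⟩

theorem IsSimple.isHighestWeight_of_pos (hρ : ρ.IsSimple)
    (hfin : ∀ μ, FiniteDimensional ℂ (ρ.wt μ)) {n m : ℤ} (hn : 0 < n) (hnm : IsCoprime n m)
    {μ : ℂ} {v : V} (hv₀ : v ≠ 0) (hv : v ∈ ρ.wt μ) (hH : ρ.H n v = 0) (hGp : ρ.Gp n v = 0)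
    (hGm : ρ.Gm n v = 0) (hL : ρ.L m v = 0) : ρ.IsHighestWeight := by
  obtain ⟨N, hN⟩ := exists_mem_annihilatedFrom hn.ne'
    (eventually_L_eq_zero hn hnm hH hGp hGm hL) hH hGp hGm
  exact hρ.isHighestWeight_of_mem_annihilatedFrom hfin hv₀ hv hN

/-! ### Reversal of modes -/

variable (ρ) in
/-- The twist of a module by the automorphism `L_m ↦ -L_{-m}`, `H_m ↦ -H_{-m}`,
`G_m^+ ↦ G_{-m}^-`, `G_m^- ↦ -G_{-m}^+`, `C ↦ -C`, which exchanges highest and lowest weight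
modules. -/
def flip : RamondRep V where
  L m := -ρ.L (-m)
  H m := -ρ.H (-m)
  Gp m := ρ.Gm (-m)
  Gm m := -ρ.Gp (-m)
  c₀ := -ρ.c₀
  even := ρ.even
  odd := ρ.odd
  grading := ρ.grading
  L_even m v hv := neg_mem (ρ.L_even (-m) v hv)
  L_odd m v hv := neg_mem (ρ.L_odd (-m) v hv)
  H_even m v hv := neg_mem (ρ.H_even (-m) v hv)
  H_odd m v hv := neg_mem (ρ.H_odd (-m) v hv)
  Gp_even m v hv := ρ.Gm_even (-m) v hv
  Gp_odd m v hv := ρ.Gm_odd (-m) v hv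
  Gm_even m v hv := neg_mem (ρ.Gp_even (-m) v hv)
  Gm_odd m v hv := neg_mem (ρ.Gp_odd (-m) v hv)
  rel_LL m n v := by
    have h := ρ.rel_LL (-m) (-n) v
    simp only [← neg_add, neg_eq_zero] at h
    simp only [LinearMap.neg_apply, map_neg, neg_neg, h]
    push_cast
    module
  rel_HH m n v := by
    have h := ρ.rel_HH (-m) (-n) v
    simp only [← neg_add, neg_eq_zero] at h
    simp only [LinearMap.neg_apply, map_neg, neg_neg, h]
    push_cast
    module
  rel_LH m n v := by
    have h := ρ.rel_LH (-m) (-n) v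
    simp only [← neg_add] at h
    simp only [LinearMap.neg_apply, map_neg, neg_neg, h]
    push_cast
    module
  rel_LGp m p v := by
    have h := ρ.rel_LGm (-m) (-p) v
    simp only [← neg_add] at h
    simp only [LinearMap.neg_apply, map_neg, ← neg_sub', h]
    push_cast
    module
  rel_LGm m p v := by
    have h := ρ.rel_LGp (-m) (-p) v
    simp only [← neg_add] at h
    simp only [LinearMap.neg_apply, map_neg, neg_neg, h]
    push_cast
    module
  rel_HGp m p v := by
    have h := ρ.rel_HGm (-m) (-p) v
    simp only [← neg_add] at h
    simp only [LinearMap.neg_apply, map_neg, ← neg_sub', h, neg_neg]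
  rel_HGm m p v := by
    have h := ρ.rel_HGp (-m) (-p) v
    simp only [← neg_add] at h
    simp only [LinearMap.neg_apply, map_neg, neg_neg, h]
  rel_GpGm p q v := by
    have h := ρ.rel_GpGm (-q) (-p) v
    simp only [← neg_add, neg_eq_zero, add_comm q p] at h
    simp only [LinearMap.neg_apply, map_neg]
    rw [← neg_add, add_comm, h]
    by_cases hpq : p + q = 0
    · obtain rfl : q = -p := by omega
      push_cast
      module
    · simp only [hpq, if_false]
      push_cast
      module
  rel_GpGp p q v := ρ.rel_GmGm (-p) (-q) v
  rel_GmGm p q v := by simpa using ρ.rel_GpGp (-p) (-q) v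

variable (ρ) in
theorem wt_flip (μ : ℂ) : ρ.flip.wt μ = ρ.wt (-μ) := by
  ext v
  simp [mem_wt, flip, neg_eq_iff_eq_neg]

theorem isSubmod_flip {W : Submodule ℂ V} : ρ.flip.IsSubmod W ↔ ρ.IsSubmod W := by
  have reindex (X : ℤ → V →ₗ[ℂ] V) :
      (∀ m, ∀ v ∈ W, X (-m) v ∈ W) ↔ ∀ m, ∀ v ∈ W, X m v ∈ W :=
    ⟨fun h m => by simpa using h (-m), fun h m => h (-m)⟩
  simp only [IsSubmod, flip, LinearMap.neg_apply, neg_mem_iff, reindex ρ.L, reindex ρ.H,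
    reindex ρ.Gp, reindex ρ.Gm, and_comm (a := ∀ m, ∀ v ∈ W, ρ.Gm m v ∈ W)]

theorem IsSimple.flip (hρ : ρ.IsSimple) : ρ.flip.IsSimple := by
  refine ⟨fun htriv => hρ.1 fun m v => ?_, fun W hW => hρ.2 W ⟨isSubmod_flip.1 hW.1, hW.2⟩⟩
  simpa [RamondRep.flip, and_comm] using htriv (-m) v

theorem IsHighestWeight.isLowestWeight_of_flip (h : ρ.flip.IsHighestWeight) :
    ρ.IsLowestWeight := by
  obtain ⟨v, hv, hgen, ⟨a, b, ha, hb⟩, hpos, hGp⟩ := h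
  refine ⟨v, hv, fun W hW => hgen W (isSubmod_flip.2 hW), ⟨-a, -b, ?_, ?_⟩, fun m hm => ?_, ?_⟩
  · simpa [flip, neg_eq_iff_eq_neg] using ha
  · simpa [flip, neg_eq_iff_eq_neg] using hb
  · simpa [flip, and_comm] using hpos (-m) (by omega)
  · simpa [flip] using hGp

theorem IsSimple.isLowestWeight_of_neg (hρ : ρ.IsSimple)
    (hfin : ∀ μ, FiniteDimensional ℂ (ρ.wt μ)) {n m : ℤ} (hn : n < 0) (hnm : IsCoprime n m)
    {μ : ℂ} {v : V} (hv₀ : v ≠ 0) (hv : v ∈ ρ.wt μ) (hH : ρ.H n v = 0) (hGp : ρ.Gp n v = 0)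
    (hGm : ρ.Gm n v = 0) (hL : ρ.L m v = 0) : ρ.IsLowestWeight :=
  (hρ.flip.isHighestWeight_of_pos (n := -n) (m := -m) (μ := -μ)
    (fun ν => by rw [wt_flip]; exact hfin _) (by omega) hnm.neg_neg hv₀
    (by rwa [wt_flip, neg_neg]) (by simpa [RamondRep.flip]) (by simpa [RamondRep.flip])
    (by simpa [RamondRep.flip]) (by simpa [RamondRep.flip])).isLowestWeight_of_flip

end RamondRep

theorem stmt2_general {V : Type} [AddCommGroup V] [Module ℂ V] (ρ : RamondRep V)
    (hfin : ∀ μ : ℂ, FiniteDimensional ℂ ↥(ρ.wt μ)) (hsimple : ρ.IsSimple)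
    (hnothw : ¬ ρ.IsHighestWeight) (hnotlw : ¬ ρ.IsLowestWeight) {n m : ℤ} (hn : n ≠ 0)
    (hnm : IsCoprime n m) {μ : ℂ} {v : V} (hv : v ∈ ρ.wt μ) (hH : ρ.H n v = 0)
    (hGp : ρ.Gp n v = 0) (hGm : ρ.Gm n v = 0) (hL : ρ.L m v = 0) : v = 0 := by
  by_contra hv₀
  rcases hn.lt_or_gt with hneg | hpos
  · exact hnotlw (hsimple.isLowestWeight_of_neg hfin hneg hnm hv₀ hv hH hGp hGm hL)
  · exact hnothw (hsimple.isHighestWeight_of_pos hfin hpos hnm hv₀ hv hH hGp hGm hL)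

/-- for a simple weight module with finite-dimensional weight spaces
over the `N = 2` Ramond algebra which is neither highest nor lowest weight, for any
`n ≠ 0` and any weight `μ` the map
`v ↦ (L_n v, H_n v, G_n^+ v, G_n^- v, L_{n+1} v)` is injective on `V_μ`
(equivalently, its kernel on `V_μ` is zero). -/
theorem stmt2 {V : Type} [AddCommGroup V] [Module ℂ V] (ρ : RamondRep V)
    (hweight : ρ.IsWeight) (hfin : ∀ μ : ℂ, FiniteDimensional ℂ ↥(ρ.wt μ))
    (hsimple : ρ.IsSimple)
    (hnothw : ¬ ρ.IsHighestWeight) (hnotlw : ¬ ρ.IsLowestWeight) :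
    ∀ n : ℤ, n ≠ 0 → ∀ μ : ℂ, ∀ v ∈ ρ.wt μ,
      ρ.L n v = 0 → ρ.H n v = 0 → ρ.Gp n v = 0 → ρ.Gm n v = 0 →
        ρ.L (n + 1) v = 0 → v = 0 := by
  intro n hn μ v hv _ hH hGp hGm hL
  have hcop : IsCoprime n (n + 1) := ⟨-1, 1, by ring⟩
  exact stmt2_general ρ hfin hsimple hnothw hnotlw hn hcop hv hH hGp hGm hL
end
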